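/- Let 𝒮 ⊂ ℝ³ be a smooth compact closed connected embedded surface of genus strictly greater than 1 (equivalently, homeomorphic to neither the 2-sphere nor the 2-torus), and let (v₋, v₊) satisfy the CVS conditions (1)–(5). Then either v₊ = v₋ on some nonempty open subset of 𝒮, or v₊ = −v₋ on some nonempty open subset of 𝒮. -/

import Mathlib

noncomputable section

open MeasureTheory Filter Set
open scoped RealInnerProductSpace Topology

abbrev E3 : Type := EuclideanSpace ℝ (Fin 3)
abbrev E2 : Type := EuclideanSpace ℝ (Fin 2)

def mk3 (a b c : ℝ) : E3 := (EuclideanSpace.equiv (Fin 3) ℝ).symm ![a, b, c]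

def e3 (i : Fin 3) : E3 := EuclideanSpace.single i 1

/-- `∂_j v_i` at `p`. -/
def pder (v : E3 → E3) (i j : Fin 3) (p : E3) : ℝ := fderiv ℝ v p (e3 j) i

def div3 (v : E3 → E3) (p : E3) : ℝ := ∑ i, pder v i i p

def curl3 (v : E3 → E3) (p : E3) : E3 :=
  mk3 (pder v 2 1 p - pder v 1 2 p) (pder v 0 2 p - pder v 2 0 p)
    (pder v 1 0 p - pder v 0 1 p)

def lap3 (f : E3 → ℝ) (p : E3) : ℝ :=
  ∑ j, fderiv ℝ (fun x => fderiv ℝ f x (e3 j)) p (e3 j)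

def IsTangentAt (S : Set E3) (p v : E3) : Prop :=
  ∃ γ : ℝ → E3, (∀ t, γ t ∈ S) ∧ γ 0 = p ∧ HasDerivAt γ v 0

def IsSurface (k : ℕ∞) (S : Set E3) : Prop :=
  ∀ p ∈ S, ∃ (f : E2 → E3) (U : Set E2) (V : Set E3),
    IsOpen U ∧ IsOpen V ∧ p ∈ V ∧ ContDiffOn ℝ k f U ∧ Set.InjOn f U ∧
    f '' U = S ∩ V ∧ ∀ x ∈ U, Function.Injective (fderiv ℝ f x)

structure CVSBase (S Ωm Ωp : Set E3) (vm vp : E3 → E3) : Prop where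
  openm : IsOpen Ωm
  openp : IsOpen Ωp
  disj : Disjoint Ωm Ωp
  disjm : Disjoint Ωm S
  disjp : Disjoint Ωp S
  clm : S ⊆ closure Ωm
  clp : S ⊆ closure Ωp
  smoothm : ∃ W, IsOpen W ∧ Ωm ∪ S ⊆ W ∧ ContDiffOn ℝ 1 vm W
  smoothp : ∃ W, IsOpen W ∧ Ωp ∪ S ⊆ W ∧ ContDiffOn ℝ 1 vp W
  divm : ∀ p ∈ Ωm, div3 vm p = 0
  divp : ∀ p ∈ Ωp, div3 vp p = 0
  curlm : ∀ p ∈ Ωm, curl3 vm p = 0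
  curlp : ∀ p ∈ Ωp, curl3 vp p = 0
  tangentm : ∀ p ∈ S, IsTangentAt S p (vm p)
  tangentp : ∀ p ∈ S, IsTangentAt S p (vp p)

structure CVSPair (S Ωm Ωp : Set E3) (vm vp : E3 → E3)
    extends CVSBase S Ωm Ωp vm vp : Prop where
  strain : ∀ p ∈ S, (fderiv ℝ vp p + fderiv ℝ vm p) (vp p - vm p) = 0
  bernoulli : ∀ p ∈ S, ∀ᶠ q in 𝓝[S] p,
    ‖vp q‖ ^ 2 - ‖vm q‖ ^ 2 = ‖vp p‖ ^ 2 - ‖vm p‖ ^ 2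

/-- the open region `Ωm` is the bounded region enclosed by the closed surface `S`,
and `Ωp` is its exterior. -/
structure EnclosedBy (S Ωm Ωp : Set E3) : Prop where
  openm : IsOpen Ωm
  bounded : Bornology.IsBounded Ωm
  fr : frontier Ωm = S
  plus : Ωp = (Ωm ∪ S)ᶜ

/-!
Put `X = v₊ + v₋` and `Y = v₊ - v₋`, and suppose that neither vanishes identically on a nonempty
open part of `𝒮`. Both Jacobians are symmetric and traceless on `𝒮`, and `DX Y = 0`. The product
`⟪X, Y⟫ = |v₊|² - |v₋|²` is locally constant and `X` is constant along the orbits of `Y`, so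
`⟪X, Y⟫ ≠ 0` would make these orbits drift to infinity: hence `⟪X, Y⟫ = 0`, and since the bracket of
tangent fields is tangent also `DY X = 0`. The same lack of drift, with the commutation of the two
flows, shows that the accelerations `DX X` and `DY Y` are orthogonal; moreover they cannot vanish
identically.

If `X` and `DX X` are independent somewhere, then `DY Y` is parallel to `Y` there; otherwise `X` and
`DX X` are parallel everywhere. So one of the fields, say `M`, has a point where `DM M ≠ 0` around
which the acceleration of the other one, `Q`, is parallel to `Q`. Near such a point `ker DM` is a
line `ℝ k` orthogonal to `M`, and the local diffeomorphism `y ↦ M y + ⟪k, y⟫ k` carries `𝒮` to a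
set containing the vertical segment through each of its points. As `DM Q = 0` and `DQ Q ∥ Q`, the
direction `k` is locally constant, and `M` and `DM M` are constant along the segments parallel to
`k`. These segments continue indefinitely, so `𝒮` contains a whole ray, against compactness.
-/

section Flow

open scoped Manifold

variable {E : Type*} [NormedAddCommGroup E] [NormedSpace ℝ E] {v : E → E} {Φ : E → ℝ → E}

/-- `Φ` is the global flow of the field `v`: the curve `Φ p` is the integral curve of `v` that
starts at `p`. -/
structure IsFlow (v : E → E) (Φ : E → ℝ → E) : Prop where
  map_zero : ∀ p, Φ p 0 = p
  hasDerivAt : ∀ p t, HasDerivAt (Φ p) (v (Φ p t)) t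

theorem exists_isFlow [CompleteSpace E] (hv : ContDiff ℝ 1 v) (hc : HasCompactSupport v) :
    ∃ Φ, IsFlow v Φ := by
  obtain ⟨K, hK⟩ := hv.lipschitzWith_of_hasCompactSupport hc (by norm_num)
  obtain ⟨B, hB⟩ := hc.exists_bound_of_continuous hv.continuous
  have local_curve (p : E) :
      ∃ γ : ℝ → E, γ 0 = p ∧ IsMIntegralCurveOn (M := E) (I := 𝓘(ℝ, E)) γ v (Ioo (-1) 1) := by
    have hPL : IsPicardLindelof (fun _ => v) (⟨0, by norm_num⟩ : Icc (-1 : ℝ) 1) p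
        B.toNNReal 0 B.toNNReal K :=
      ⟨fun _ _ => hK.lipschitzOnWith, fun _ _ => continuousOn_const,
        fun _ _ x _ => (hB x).trans (Real.le_coe_toNNReal B), by simp⟩
    obtain ⟨γ, hγ0, hγ⟩ := hPL.exists_eq_forall_mem_Icc_hasDerivWithinAt₀
    exact ⟨γ, hγ0, fun t ht =>
      ((hγ t (Ioo_subset_Icc_self ht)).mono
        Ioo_subset_Icc_self).hasFDerivWithinAt.hasMFDerivWithinAt⟩
  have global_curve (p : E) : ∃ γ : ℝ → E, γ 0 = p ∧ ∀ t, HasDerivAt γ (v (γ t)) t := by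
    obtain ⟨γ, hγ0, hγ⟩ := exists_isMIntegralCurve_of_isMIntegralCurveOn (I := 𝓘(ℝ, E))
      (contMDiff_vectorSpace_iff_contDiff.2 hv) one_pos local_curve p
    refine ⟨γ, hγ0, fun t => ?_⟩
    have hderiv : HasFDerivAt γ ((1 : ℝ →L[ℝ] ℝ).smulRight (v (γ t))) t := (hγ t).hasFDerivAt
    simpa using hderiv.hasDerivAt
  choose Φ hΦ0 hΦ using global_curve
  exact ⟨Φ, hΦ0, hΦ⟩

namespace IsFlow

theorem continuous (hΦ : IsFlow v Φ) (p : E) : Continuous (Φ p) :=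
  continuous_iff_continuousAt.2 fun t => (hΦ.hasDerivAt p t).continuousAt

theorem neg (hΦ : IsFlow v Φ) : IsFlow (-v) fun p t => Φ p (-t) where
  map_zero p := by simp [hΦ.map_zero]
  hasDerivAt p t := by
    simpa [Function.comp_def] using (hΦ.hasDerivAt p (-t)).scomp t (hasDerivAt_neg t)

theorem dist_le {K : NNReal} (hΦ : IsFlow v Φ) (hv : LipschitzWith K v) (p q : E) (t : ℝ) :
    dist (Φ p t) (Φ q t) ≤ dist p q * Real.exp (K * |t|) := by
  have forward {v : E → E} {Φ : E → ℝ → E} (hΦ : IsFlow v Φ) (hv : LipschitzWith K v) {t : ℝ}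
      (ht : 0 ≤ t) : dist (Φ p t) (Φ q t) ≤ dist p q * Real.exp (K * t) := by
    simpa using dist_le_of_trajectories_ODE (v := fun _ => v) (a := 0) (b := t)
      (δ := dist p q) (fun _ => hv)
      (hΦ.continuous p).continuousOn (fun s _ => (hΦ.hasDerivAt p s).hasDerivWithinAt)
      (hΦ.continuous q).continuousOn (fun s _ => (hΦ.hasDerivAt q s).hasDerivWithinAt)
      (by rw [hΦ.map_zero, hΦ.map_zero]) t ⟨ht, le_rfl⟩
  rcases le_total 0 t with ht | ht
  · simpa [abs_of_nonneg ht] using forward hΦ hv ht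
  · simpa [abs_of_nonpos ht] using forward hΦ.neg hv.neg (neg_nonneg.2 ht)

theorem norm_sub_sub_sub_le {K : NNReal} (hΦ : IsFlow v Φ) (hv : LipschitzWith K v) (p q : E)
    (t : ℝ) :
    ‖Φ p t - Φ q t - (p - q)‖ ≤ K * Real.exp (K * |t|) * |t| * ‖p - q‖ := by
  have hderiv (s : ℝ) : HasDerivAt (fun s => Φ p s - Φ q s) (v (Φ p s) - v (Φ q s)) s :=
    (hΦ.hasDerivAt p s).sub (hΦ.hasDerivAt q s)
  have hbound (s : ℝ) (hs : s ∈ uIcc 0 t) :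
      ‖v (Φ p s) - v (Φ q s)‖ ≤ K * (‖p - q‖ * Real.exp (K * |t|)) := by
    have hst : |s| ≤ |t| := by simpa using abs_sub_left_of_mem_uIcc hs
    simp only [← dist_eq_norm]
    exact (hv.dist_le_mul _ _).trans (by gcongr; exact (hΦ.dist_le hv p q s).trans (by gcongr))
  have := Convex.norm_image_sub_le_of_norm_hasDerivWithin_le
    (fun s _ => (hderiv s).hasDerivWithinAt) hbound (convex_uIcc 0 t) left_mem_uIcc right_mem_uIcc
  simp only [hΦ.map_zero, sub_zero, Real.norm_eq_abs] at this
  exact this.trans_eq (by ring)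

theorem continuousAt_uncurry {K : NNReal} (hΦ : IsFlow v Φ) (hv : LipschitzWith K v) (p : E)
    (t : ℝ) : ContinuousAt (fun z : E × ℝ => Φ z.1 z.2) (p, t) := by
  have hinit : Tendsto (fun z : E × ℝ => dist z.1 p * Real.exp (K * |z.2|)) (𝓝 (p, t)) (𝓝 0) := by
    have : Continuous fun z : E × ℝ => dist z.1 p * Real.exp (K * |z.2|) := by fun_prop
    simpa using this.tendsto (p, t)
  have htime : Tendsto (fun z : E × ℝ => dist (Φ p z.2) (Φ p t)) (𝓝 (p, t)) (𝓝 0) := by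
    have : Continuous fun z : E × ℝ => dist (Φ p z.2) (Φ p t) :=
      ((hΦ.continuous p).comp continuous_snd).dist continuous_const
    simpa using this.tendsto (p, t)
  refine tendsto_iff_dist_tendsto_zero.2 (squeeze_zero (fun _ => dist_nonneg)
    (fun z => (dist_triangle _ (Φ p z.2) _).trans ?_) (by simpa using hinit.add htime))
  gcongr
  exact hΦ.dist_le hv _ _ _

theorem isLittleO_time {K : NNReal} (hΦ : IsFlow v Φ) (hv : LipschitzWith K v) (p : E) :
    (fun w : (E × ℝ) × (E × ℝ) =>
        Φ w.2.1 w.1.2 - Φ w.2.1 w.2.2 - (w.1.2 - w.2.2) • v p)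
      =o[𝓝 ((p, 0), (p, 0))] fun w => w.1 - w.2 := by
  refine Asymptotics.isLittleO_iff.2 fun c hc => ?_
  have hclose : ∀ᶠ z : E × ℝ in 𝓝 (p, 0), ‖v (Φ z.1 z.2) - v p‖ ≤ c := by
    have hcont : ContinuousAt (fun z : E × ℝ => v (Φ z.1 z.2) - v p) (p, 0) :=
      (hv.continuous.continuousAt.comp (hΦ.continuousAt_uncurry hv p 0)).sub continuousAt_const
    exact (hcont.norm.eventually_lt_const (by simpa [hΦ.map_zero] using hc)).mono fun _ => le_of_lt
  obtain ⟨r, hr, hball⟩ := Metric.eventually_nhds_iff_ball.1 hclose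
  filter_upwards [prod_mem_nhds (Metric.ball_mem_nhds (p, (0 : ℝ)) hr)
    (Metric.ball_mem_nhds (p, (0 : ℝ)) hr)]
  rintro ⟨⟨a, t⟩, b, s⟩ ⟨ht, hs⟩
  rw [← ball_prod_same] at ht hs
  have hderiv (u : ℝ) : HasDerivAt (fun u => Φ b u - u • v p) (v (Φ b u) - v p) u := by
    simpa using (hΦ.hasDerivAt b u).fun_sub ((hasDerivAt_id u).smul_const (v p))
  have := Convex.norm_image_sub_le_of_norm_hasDerivWithin_le
    (fun u _ => (hderiv u).hasDerivWithinAt)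
    (fun u hu => hball (b, u) (by rw [← ball_prod_same]; exact ⟨hs.1, hu⟩))
    (convex_ball (0 : ℝ) r) hs.2 ht.2
  calc ‖Φ b t - Φ b s - (t - s) • v p‖ = ‖Φ b t - t • v p - (Φ b s - s • v p)‖ := by
        congr 1; module
    _ ≤ c * ‖t - s‖ := this
    _ ≤ c * ‖(a, t) - (b, s)‖ := by gcongr; exact norm_snd_le ((a, t) - (b, s))

theorem isLittleO_space {K : NNReal} (hΦ : IsFlow v Φ) (hv : LipschitzWith K v) (p : E) :
    (fun w : (E × ℝ) × (E × ℝ) =>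
        Φ w.1.1 w.1.2 - Φ w.2.1 w.1.2 - (w.1.1 - w.2.1))
      =o[𝓝 ((p, 0), (p, 0))] fun w => w.1 - w.2 := by
  refine Asymptotics.isLittleO_iff.2 fun c hc => ?_
  have hsmall : ∀ᶠ w : (E × ℝ) × (E × ℝ) in 𝓝 ((p, 0), (p, 0)),
      K * Real.exp (K * |w.1.2|) * |w.1.2| < c := by
    have : Continuous fun w : (E × ℝ) × (E × ℝ) => K * Real.exp (K * |w.1.2|) * |w.1.2| := by
      fun_prop
    exact this.continuousAt.eventually_lt_const (by simpa using hc)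
  filter_upwards [hsmall] with w hw
  calc _ ≤ K * Real.exp (K * |w.1.2|) * |w.1.2| * ‖w.1.1 - w.2.1‖ := hΦ.norm_sub_sub_sub_le hv ..
    _ ≤ c * ‖w.1 - w.2‖ := by gcongr; exact norm_fst_le (w.1 - w.2)

theorem hasStrictFDerivAt_zero {K : NNReal} (hΦ : IsFlow v Φ) (hv : LipschitzWith K v) (p : E) :
    HasStrictFDerivAt (fun z : E × ℝ => Φ z.1 z.2)
      (ContinuousLinearMap.fst ℝ E ℝ + (ContinuousLinearMap.snd ℝ E ℝ).smulRight (v p)) (p, 0) := by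
  refine HasStrictFDerivAt.of_isLittleO
    (((hΦ.isLittleO_space hv p).add (hΦ.isLittleO_time hv p)).congr_left fun w => ?_)
  simp only [add_apply, ContinuousLinearMap.coe_fst', ContinuousLinearMap.smulRight_apply,
    ContinuousLinearMap.coe_snd', Prod.fst_sub, Prod.snd_sub]
  abel

theorem eq_of_fderiv_eq_zero {F : Type*} [NormedAddCommGroup F] [NormedSpace ℝ F] {S : Set E}
    (hΦ : IsFlow v Φ) (hS : ∀ p ∈ S, ∀ t, Φ p t ∈ S) {g : E → F} (hg : Differentiable ℝ g)
    (h : ∀ p ∈ S, fderiv ℝ g p (v p) = 0) {p : E} (hp : p ∈ S) (t : ℝ) : g (Φ p t) = g p := by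
  have hderiv (t : ℝ) : HasDerivAt (fun t => g (Φ p t)) 0 t := by
    simpa only [h _ (hS p hp t), Function.comp_def] using
      (hg _).hasFDerivAt.comp_hasDerivAt t (hΦ.hasDerivAt p t)
  simpa [hΦ.map_zero] using is_const_of_deriv_eq_zero
    (fun t => (hderiv t).differentiableAt) (fun t => (hderiv t).deriv) t 0

theorem norm_sub_add_sub_le {K : NNReal} {C r : ℝ} (hΦ : IsFlow v Φ) (hv : LipschitzWith K v)
    (hC : 0 ≤ C) (hr : 0 < r) {p q : E} {β : ℝ → E} (hβ : ∀ s, v (β s) = v (Φ q s))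
    (h : ∀ s, 0 ≤ s → ‖Φ p s - β s‖ ≤ C * Real.exp (r * s)) {s : ℝ} (hs : 0 ≤ s) :
    ‖Φ p s - (Φ q s + (p - q))‖ ≤ K / r * (C * Real.exp (r * s)) := by
  have hderiv (s : ℝ) :
      HasDerivAt (fun s => Φ p s - (Φ q s + (p - q))) (v (Φ p s) - v (Φ q s)) s :=
    (hΦ.hasDerivAt p s).sub ((hΦ.hasDerivAt q s).add_const _)
  have hexp (s : ℝ) : HasDerivAt (fun s => K / r * (C * Real.exp (r * s)))
      (K * (C * Real.exp (r * s))) s := by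
    refine (((((hasDerivAt_id' s).const_mul r).exp).const_mul C).const_mul
      (K / r : ℝ)).congr_deriv ?_
    field_simp
  refine image_norm_le_of_norm_deriv_right_le_deriv_boundary (a := 0) (b := s)
    (fun s _ => (hderiv s).continuousAt.continuousWithinAt)
    (fun s _ => (hderiv s).hasDerivWithinAt) ?_ hexp (fun s hs => ?_) ⟨hs, le_rfl⟩
  · rw [hΦ.map_zero, hΦ.map_zero, add_sub_cancel, sub_self, norm_zero]
    positivity
  · rw [← hβ, ← dist_eq_norm]
    refine (hv.dist_le_mul _ _).trans ?_
    gcongr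
    simpa [dist_eq_norm] using h s hs.1

section Commute

variable {X Y : E → E} {Φ Ψ : E → ℝ → E} {S : Set E} {K : NNReal}

/- Both compositions of the flows stay close to `Φ q s + Ψ q t - q`. With the rate `4 * K + 1` each
deviation is at most a quarter of the given bound, so iterating the lemma makes them equal. -/
theorem norm_comm_le_half (hΦ : IsFlow X Φ) (hΨ : IsFlow Y Ψ) (hX : LipschitzWith K X)
    (hY : LipschitzWith K Y) {q : E} (hXΨ : ∀ s t, X (Ψ (Φ q s) t) = X (Φ q s))
    (hYΦ : ∀ s t, Y (Φ (Ψ q t) s) = Y (Ψ q t)) {C : ℝ} (hC : 0 ≤ C)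
    (h : ∀ s t, 0 ≤ s → 0 ≤ t →
      ‖Φ (Ψ q t) s - Ψ (Φ q s) t‖ ≤ C * Real.exp ((4 * K + 1) * (s + t)))
    {s t : ℝ} (hs : 0 ≤ s) (ht : 0 ≤ t) :
    ‖Φ (Ψ q t) s - Ψ (Φ q s) t‖ ≤ C / 2 * Real.exp ((4 * K + 1) * (s + t)) := by
  set r : ℝ := 4 * K + 1
  have hr0 : 0 < r := by positivity
  have hquarter : K / r ≤ (1 : ℝ) / 4 := by
    rw [div_le_div_iff₀ hr0 (by norm_num)]; linarith
  have hΦc : ‖Φ (Ψ q t) s - (Φ q s + (Ψ q t - q))‖ ≤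
      K / r * (C * Real.exp (r * t) * Real.exp (r * s)) :=
    hΦ.norm_sub_add_sub_le hX (by positivity) hr0 (fun s => hXΨ s t)
      (fun s hs => (h s t hs ht).trans_eq (by rw [mul_assoc, ← Real.exp_add]; ring_nf)) hs
  have hΨc : ‖Ψ (Φ q s) t - (Ψ q t + (Φ q s - q))‖ ≤
      K / r * (C * Real.exp (r * s) * Real.exp (r * t)) :=
    hΨ.norm_sub_add_sub_le hY (by positivity) hr0 (fun t => hYΦ s t)
      (fun t ht => (norm_sub_rev _ _).trans_le ((h s t hs ht).trans_eq
        (by rw [mul_assoc, ← Real.exp_add]; ring_nf))) ht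
  calc ‖Φ (Ψ q t) s - Ψ (Φ q s) t‖
      = ‖Φ (Ψ q t) s - (Φ q s + (Ψ q t - q)) - (Ψ (Φ q s) t - (Ψ q t + (Φ q s - q)))‖ := by
        congr 1; abel
    _ ≤ 2 * (K / r) * (C * (Real.exp (r * s) * Real.exp (r * t))) :=
        (norm_sub_le _ _).trans ((add_le_add hΦc hΨc).trans_eq (by ring))
    _ ≤ 2 * (1 / 4) * (C * (Real.exp (r * s) * Real.exp (r * t))) := by gcongr
    _ = C / 2 * Real.exp (r * (s + t)) := by rw [mul_add, Real.exp_add]; ring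

theorem comm (hΦ : IsFlow X Φ) (hΨ : IsFlow Y Ψ) (hX : LipschitzWith K X)
    (hY : LipschitzWith K Y) (hS : Bornology.IsBounded S) (hΦS : ∀ p ∈ S, ∀ t, Φ p t ∈ S)
    (hΨS : ∀ p ∈ S, ∀ t, Ψ p t ∈ S) (hXΨ : ∀ p ∈ S, ∀ t, X (Ψ p t) = X p)
    (hYΦ : ∀ p ∈ S, ∀ t, Y (Φ p t) = Y p) {q : E} (hq : q ∈ S) {s t : ℝ} (hs : 0 ≤ s)
    (ht : 0 ≤ t) : Φ (Ψ q t) s = Ψ (Φ q s) t := by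
  obtain ⟨R, hR0, hR⟩ := hS.exists_pos_norm_le
  have hle (n : ℕ) : ∀ s t, 0 ≤ s → 0 ≤ t → ‖Φ (Ψ q t) s - Ψ (Φ q s) t‖ ≤
      2 * R * (1 / 2) ^ n * Real.exp ((4 * K + 1) * (s + t)) := by
    induction n with
    | zero =>
      intro s t hs ht
      have hone : 1 ≤ Real.exp ((4 * K + 1) * (s + t)) := Real.one_le_exp (by positivity)
      calc ‖Φ (Ψ q t) s - Ψ (Φ q s) t‖ ≤ R + R := (norm_sub_le _ _).trans
            (add_le_add (hR _ (hΦS _ (hΨS q hq t) s)) (hR _ (hΨS _ (hΦS q hq s) t)))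
        _ ≤ 2 * R * (1 / 2) ^ 0 * Real.exp ((4 * K + 1) * (s + t)) := by
            rw [pow_zero, mul_one, ← two_mul]; exact le_mul_of_one_le_right (by positivity) hone
    | succ n ih =>
      intro s t hs ht
      refine (norm_comm_le_half hΦ hΨ hX hY (fun s => hXΨ _ (hΦS q hq s))
        (fun s t => hYΦ _ (hΨS q hq t) s) (by positivity) ih hs ht).trans_eq (by ring)
  have hlim : Tendsto (fun n : ℕ => 2 * R * (1 / 2) ^ n * Real.exp ((4 * K + 1) * (s + t)))
      atTop (𝓝 0) := by
    simpa using ((tendsto_pow_atTop_nhds_zero_of_lt_one (r := (1 / 2 : ℝ)) (by norm_num)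
      (by norm_num)).const_mul (2 * R)).mul_const (Real.exp ((4 * K + 1) * (s + t)))
  exact sub_eq_zero.1 (norm_le_zero_iff.1 (ge_of_tendsto' hlim fun n => hle n s t hs ht))

theorem fderiv_self_eq_of_comm (hΦ : IsFlow X Φ) (hΨ : IsFlow Y Ψ) (hX : LipschitzWith K X)
    (hY : LipschitzWith K Y) (hYd : Differentiable ℝ Y) (hS : Bornology.IsBounded S)
    (hΦS : ∀ p ∈ S, ∀ t, Φ p t ∈ S) (hΨS : ∀ p ∈ S, ∀ t, Ψ p t ∈ S)
    (hXΨ : ∀ p ∈ S, ∀ t, X (Ψ p t) = X p) (hYΦ : ∀ p ∈ S, ∀ t, Y (Φ p t) = Y p) {q : E}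
    (hq : q ∈ S) {s : ℝ} (hs : 0 ≤ s) :
    fderiv ℝ Y (Φ q s) (Y (Φ q s)) = fderiv ℝ Y q (Y q) := by
  have hderiv (p : E) : HasDerivWithinAt (fun t => Y (Ψ p t)) (fderiv ℝ Y p (Y p)) (Ici 0) 0 := by
    have := (hYd (Ψ p 0)).hasFDerivAt.comp_hasDerivAt 0 (hΨ.hasDerivAt p 0)
    rw [hΨ.map_zero] at this
    exact this.hasDerivWithinAt
  have heq : ∀ t ∈ Ici (0 : ℝ), Y (Ψ (Φ q s) t) = Y (Ψ q t) := fun t ht => by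
    rw [← comm hΦ hΨ hX hY hS hΦS hΨS hXΨ hYΦ hq hs ht, hYΦ _ (hΨS q hq t)]
  exact (uniqueDiffOn_Ici 0 0 self_mem_Ici).eq_deriv _
    ((hderiv (Φ q s)).congr (fun t ht => (heq t ht).symm) (heq 0 self_mem_Ici).symm) (hderiv q)

end Commute

end IsFlow

theorem eq_zero_of_hasDerivAt_const_of_isBounded {γ : ℝ → E} {c : E}
    (hγ : ∀ t, HasDerivAt γ c t) (hb : Bornology.IsBounded (range γ)) : c = 0 := by
  have haff (t : ℝ) : γ t - t • c = γ 0 := by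
    have hderiv (t : ℝ) : HasDerivAt (fun t => γ t - t • c) 0 t := by
      simpa using (hγ t).fun_sub ((hasDerivAt_id t).smul_const c)
    simpa using is_const_of_deriv_eq_zero
      (fun t => (hderiv t).differentiableAt) (fun t => (hderiv t).deriv) t 0
  obtain ⟨C, hC⟩ := hb.exists_norm_le
  rw [forall_mem_range] at hC
  have hgrow (n : ℕ) : n • ‖c‖ ≤ C + C := by
    calc n • ‖c‖ = ‖γ n - γ 0‖ := by simp [← haff n, norm_smul]
      _ ≤ C + C := (norm_sub_le _ _).trans (add_le_add (hC _) (hC _))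
  by_contra hc
  obtain ⟨n, hn⟩ := exists_lt_nsmul (norm_pos_iff.2 hc) (C + C)
  exact (hgrow n).not_gt hn

theorem inner_fderiv_self_fderiv_self_eq_zero {E : Type*} [NormedAddCommGroup E]
    [InnerProductSpace ℝ E] {X Y : E → E} {Φ Ψ : E → ℝ → E} {S : Set E} {K : NNReal}
    (hΦ : IsFlow X Φ) (hΨ : IsFlow Y Ψ) (hX : LipschitzWith K X) (hY : LipschitzWith K Y)
    (hXd : Differentiable ℝ X) (hYd : Differentiable ℝ Y) (hS : Bornology.IsBounded S)
    (hΦS : ∀ p ∈ S, ∀ t, Φ p t ∈ S) (hΨS : ∀ p ∈ S, ∀ t, Ψ p t ∈ S)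
    (hXΨ : ∀ p ∈ S, ∀ t, X (Ψ p t) = X p) (hYΦ : ∀ p ∈ S, ∀ t, Y (Φ p t) = Y p)
    (hXY : ∀ p ∈ S, ⟪X p, fderiv ℝ Y p (Y p)⟫ = 0) {q : E} (hq : q ∈ S) :
    ⟪fderiv ℝ X q (X q), fderiv ℝ Y q (Y q)⟫ = 0 := by
  have hderiv : HasDerivWithinAt (fun s => ⟪X (Φ q s), fderiv ℝ Y q (Y q)⟫)
      ⟪fderiv ℝ X q (X q), fderiv ℝ Y q (Y q)⟫ (Ici 0) 0 := by
    have hXΦ := (hXd (Φ q 0)).hasFDerivAt.comp_hasDerivAt 0 (hΦ.hasDerivAt q 0)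
    rw [hΦ.map_zero] at hXΦ
    simpa using (hXΦ.inner ℝ (hasDerivAt_const 0 (fderiv ℝ Y q (Y q)))).hasDerivWithinAt
  have hzero : ∀ s ∈ Ici (0 : ℝ), ⟪X (Φ q s), fderiv ℝ Y q (Y q)⟫ = 0 := fun s hs => by
    rw [← hΦ.fderiv_self_eq_of_comm hΨ hX hY hYd hS hΦS hΨS hXΨ hYΦ hq hs, hXY _ (hΦS q hq s)]
  exact (uniqueDiffOn_Ici 0 0 self_mem_Ici).eq_deriv _ hderiv
    ((hasDerivWithinAt_const 0 (Ici (0 : ℝ)) 0).congr hzero (hzero 0 self_mem_Ici))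

end Flow

section Sheet

variable {E G : Type*} [NormedAddCommGroup E] [NormedSpace ℝ E] [FiniteDimensional ℝ E]
  [NormedAddCommGroup G] [NormedSpace ℝ G] [FiniteDimensional ℝ G]

theorem surjective_coprod_toSpanSingleton
    (hfin : Module.finrank ℝ E = Module.finrank ℝ G + 1) {A : G →ₗ[ℝ] E}
    (hA : Function.Injective A) {w : E} (hw : w ∉ range A) :
    Function.Surjective (A.coprod (LinearMap.toSpanSingleton ℝ E w)) := by
  have hw0 : w ≠ 0 := fun h => hw ⟨0, by simp [h]⟩
  have hdisj : Disjoint (LinearMap.range A)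
      (LinearMap.range (LinearMap.toSpanSingleton ℝ E w)) := by
    rw [LinearMap.range_toSpanSingleton, Submodule.disjoint_span_singleton' hw0]
    exact hw
  refine (LinearMap.injective_iff_surjective_of_finrank_eq_finrank (by simp [hfin])).1 ?_
  rw [← LinearMap.ker_eq_bot, LinearMap.ker_coprod_of_disjoint_range _ _ hdisj,
    LinearMap.ker_eq_bot.2 hA, LinearMap.ker_toSpanSingleton _ hw0, Submodule.prod_bot]

theorem IsFlow.mem_range_of_interior_eq_empty {v : E → E} {Φ : E → ℝ → E} {K : NNReal}
    {S : Set E} (hΦ : IsFlow v Φ) (hv : LipschitzWith K v) (hΦS : ∀ p ∈ S, ∀ t, Φ p t ∈ S)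
    (hS : interior S = ∅) (hfin : Module.finrank ℝ E = Module.finrank ℝ G + 1) {f : G → E}
    {A : G →L[ℝ] E} {x : G} (hf : HasStrictFDerivAt f A x) (hA : Function.Injective A)
    (hfS : ∀ᶠ y in 𝓝 x, f y ∈ S) : v (f x) ∈ range A := by
  by_contra hvA
  have hsweep : HasStrictFDerivAt (fun z : G × ℝ => Φ (f z.1) z.2)
      (A.coprod (ContinuousLinearMap.toSpanSingleton ℝ (v (f x)))) (x, 0) := by
    have hinit : HasStrictFDerivAt (fun z : G × ℝ => (f z.1, z.2))
        ((A.comp (ContinuousLinearMap.fst ℝ G ℝ)).prod (ContinuousLinearMap.snd ℝ G ℝ)) (x, 0) :=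
      HasStrictFDerivAt.prodMk (hf.comp (x, (0 : ℝ)) hasStrictFDerivAt_fst) hasStrictFDerivAt_snd
    refine ((hΦ.hasStrictFDerivAt_zero hv (f x)).comp (x, (0 : ℝ)) hinit).congr_fderiv ?_
    ext z <;> simp
  have hsurj := surjective_coprod_toSpanSingleton hfin (A := A.toLinearMap) hA hvA
  have hmap := hsweep.map_nhds_eq_of_surj (LinearMap.range_eq_top.2 hsurj)
  have hnhds : S ∈ 𝓝 (Φ (f x) 0) := by
    rw [← hmap, mem_map]
    filter_upwards [continuous_fst.continuousAt.eventually hfS] with z hz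
    exact hΦS _ hz _
  simpa [hS] using mem_interior_iff_mem_nhds.2 hnhds

theorem exists_differentiableAt_lift {f : G → E} {x : G} (hf : ContDiffAt ℝ 2 f x)
    (hinj : Function.Injective (fderiv ℝ f x)) {v : E → E} (hv : DifferentiableAt ℝ v (f x))
    (htan : ∀ᶠ y in 𝓝 x, v (f y) ∈ range (fderiv ℝ f y)) :
    ∃ η : G → G, DifferentiableAt ℝ η x ∧ ∀ᶠ y in 𝓝 x, fderiv ℝ f y (η y) = v (f y) := by
  obtain ⟨P, hP⟩ := LinearMap.exists_leftInverse_of_injective (fderiv ℝ f x).toLinearMap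
    (LinearMap.ker_eq_bot.2 hinj)
  have hdf : DifferentiableAt ℝ (fderiv ℝ f) x :=
    (hf.fderiv_right (m := 1) le_rfl).differentiableAt one_ne_zero
  set L : G → G →L[ℝ] G := fun y => P.toContinuousLinearMap.comp (fderiv ℝ f y)
  have hL : DifferentiableAt ℝ L x := (differentiableAt_const _).clm_comp hdf
  have hLx : IsUnit (L x) := by
    have : L x = 1 := by ext1 ξ; exact LinearMap.congr_fun hP ξ
    exact this ▸ isUnit_one
  refine ⟨fun y => Ring.inverse (L y) (P.toContinuousLinearMap (v (f y))), ?_, ?_⟩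
  · refine DifferentiableAt.clm_apply ?_ ?_
    · exact (differentiableAt_inverse hLx).comp x hL
    · exact P.toContinuousLinearMap.differentiableAt.comp x
        (hv.comp x (hf.differentiableAt two_ne_zero))
  · filter_upwards [htan, hL.continuousAt.eventually (hLx.unit.nhds)] with y ⟨ξ, hξ⟩ hLy
    have : Ring.inverse (L y) (L y ξ) = ξ :=
      DFunLike.congr_fun (Ring.inverse_mul_cancel _ hLy) ξ
    simp only [← hξ]
    exact congrArg _ this

theorem lieBracket_mem_range {f : G → E} {x : G} (hf : ContDiffAt ℝ 2 f x)
    (hinj : Function.Injective (fderiv ℝ f x)) {X Y : E → E} (hX : DifferentiableAt ℝ X (f x))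
    (hY : DifferentiableAt ℝ Y (f x)) (htanX : ∀ᶠ y in 𝓝 x, X (f y) ∈ range (fderiv ℝ f y))
    (htanY : ∀ᶠ y in 𝓝 x, Y (f y) ∈ range (fderiv ℝ f y)) :
    VectorField.lieBracket ℝ X Y (f x) ∈ range (fderiv ℝ f x) := by
  obtain ⟨ξ, hξd, hξ⟩ := exists_differentiableAt_lift hf hinj hX htanX
  obtain ⟨η, hηd, hη⟩ := exists_differentiableAt_lift hf hinj hY htanY
  have hdf : DifferentiableAt ℝ (fderiv ℝ f) x :=
    (hf.fderiv_right (m := 1) le_rfl).differentiableAt one_ne_zero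
  have hderiv {v : E → E} {ζ : G → G} (hv : DifferentiableAt ℝ v (f x))
      (hζd : DifferentiableAt ℝ ζ x) (hζ : ∀ᶠ y in 𝓝 x, fderiv ℝ f y (ζ y) = v (f y)) (a : G) :
      fderiv ℝ v (f x) (fderiv ℝ f x a) =
        fderiv ℝ f x (fderiv ℝ ζ x a) + fderiv ℝ (fderiv ℝ f) x a (ζ x) := by
    have hcomp := hv.hasFDerivAt.comp x (hf.differentiableAt two_ne_zero).hasFDerivAt
    have hlift := (hdf.hasFDerivAt.clm_apply hζd.hasFDerivAt).congr_of_eventuallyEq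
      (hζ.mono fun y hy => hy.symm)
    simpa using DFunLike.congr_fun (hcomp.unique hlift) a
  refine ⟨fderiv ℝ η x (ξ x) - fderiv ℝ ξ x (η x), ?_⟩
  have hsymm : fderiv ℝ (fderiv ℝ f) x (ξ x) (η x) = fderiv ℝ (fderiv ℝ f) x (η x) (ξ x) :=
    (hf.isSymmSndFDerivAt (by simp)).eq _ _
  rw [VectorField.lieBracket, ← hξ.self_of_nhds, ← hη.self_of_nhds, hderiv hY hηd hη,
    hderiv hX hξd hξ, hsymm, map_sub]
  abel

end Sheet

section Tangent

theorem IsTangentAt.neg {S : Set E3} {p v : E3} (h : IsTangentAt S p v) :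
    IsTangentAt S p (-v) := by
  obtain ⟨γ, hγS, hγ0, hγ⟩ := h
  refine ⟨fun t => γ (-t), fun t => hγS _, by simpa using hγ0, ?_⟩
  have hγ' : HasDerivAt γ v (-0) := by simpa using hγ
  simpa [Function.comp_def] using hγ'.scomp 0 (hasDerivAt_neg 0)

theorem IsTangentAt.of_eventually {S : Set E3} {p v : E3} {γ : ℝ → E3}
    (hγS : ∀ᶠ t in 𝓝 0, γ t ∈ S) (hγ0 : γ 0 = p) (hγ : HasDerivAt γ v 0) : IsTangentAt S p v := by
  classical
  have hp : p ∈ S := hγ0 ▸ hγS.self_of_nhds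
  refine ⟨fun t => if γ t ∈ S then γ t else p, fun t => ?_, by simp [hγ0], ?_⟩
  · dsimp only
    split_ifs with h
    exacts [h, hp]
  · exact hγ.congr_of_eventuallyEq (hγS.mono fun t ht => if_pos ht)

theorem eventually_slope_infDist_lt {S : Set E3} {v w : E3} {γ : ℝ → E3} {x r : ℝ} {q : E3}
    (hq : Metric.infDist (γ x) S = dist (γ x) q) (hw : IsTangentAt S q w)
    (hγ : HasDerivAt γ v x) (hr : ‖v - w‖ < r) :
    ∀ᶠ z in 𝓝[>] x, (z - x)⁻¹ * (Metric.infDist (γ z) S - Metric.infDist (γ x) S) < r := by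
  obtain ⟨c, hcS, hc0, hc⟩ := hw
  have hshift : HasDerivAt (fun z => γ z - c (z - x)) (v - w) x := by
    have hc' : HasDerivAt c w (x - x) := by simpa using hc
    simpa [Function.comp_def] using
      hγ.fun_sub (hc'.scomp (h := fun z => z - x) x ((hasDerivAt_id' x).sub_const x))
  have hslope := (hshift.hasDerivWithinAt (s := Ici x)).limsup_slope_norm_le hr
  filter_upwards [hslope.filter_mono (nhdsWithin_mono _ Ioi_subset_Ici_self),
    self_mem_nhdsWithin] with z hz hzx
  have hzx' : 0 ≤ z - x := sub_nonneg.2 (mem_Ioi.1 hzx).le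
  rw [Real.norm_of_nonneg hzx'] at hz
  refine lt_of_le_of_lt ?_ hz
  gcongr
  · rw [← dist_eq_norm]; exact Metric.infDist_le_dist_of_mem (hcS _)
  · rw [sub_self, hc0, hq, dist_eq_norm]

/- Nagumo's theorem: the distance to `S` satisfies Grönwall's differential inequality, because
at a nearest point of `S` the field is tangent to `S`. -/
theorem IsFlow.mem_of_isTangentAt {S : Set E3} (hS : IsCompact S) {v : E3 → E3}
    {Φ : E3 → ℝ → E3} {K : NNReal} (hΦ : IsFlow v Φ) (hv : LipschitzWith K v)
    (htan : ∀ p ∈ S, IsTangentAt S p (v p)) {p : E3} (hp : p ∈ S) (t : ℝ) : Φ p t ∈ S := by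
  have forward {v : E3 → E3} {Φ : E3 → ℝ → E3} (hΦ : IsFlow v Φ) (hv : LipschitzWith K v)
      (htan : ∀ p ∈ S, IsTangentAt S p (v p)) {t : ℝ} (ht : 0 ≤ t) : Φ p t ∈ S := by
    have hbound := le_gronwallBound_of_liminf_deriv_right_le
      (f := fun t => Metric.infDist (Φ p t) S) (f' := fun t => K * Metric.infDist (Φ p t) S)
      (δ := 0) (K := K) (ε := 0) (a := 0) (b := t)
      ((Metric.continuous_infDist_pt S).comp (hΦ.continuous p)).continuousOn
      (fun x _ r hr => by
        obtain ⟨q, hqS, hq⟩ := hS.exists_infDist_eq_dist ⟨p, hp⟩ (Φ p x)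
        refine (eventually_slope_infDist_lt hq (htan q hqS) (hΦ.hasDerivAt p x)
          (lt_of_le_of_lt ?_ hr)).frequently
        rw [← dist_eq_norm, hq]
        exact hv.dist_le_mul _ _)
      (by simp [hΦ.map_zero, Metric.infDist_zero_of_mem hp]) (fun x _ => by simp) t ⟨ht, le_rfl⟩
    rw [gronwallBound_ε0_δ0] at hbound
    exact (hS.isClosed.mem_iff_infDist_zero ⟨p, hp⟩).2 (hbound.antisymm Metric.infDist_nonneg)
  rcases le_total 0 t with ht | ht
  · exact forward hΦ hv htan ht
  · simpa using forward hΦ.neg hv.neg (fun p hp => (htan p hp).neg) (neg_nonneg.2 ht)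

end Tangent

section Chart

/-- The data of `IsSurface 2 S` at a point: `f` parametrizes the part of `S` that lies in `V` by
the open set `U`. The inverse of `f` need not be continuous. -/
structure IsChart (S : Set E3) (f : E2 → E3) (U : Set E2) (V : Set E3) : Prop where
  isOpen_source : IsOpen U
  isOpen_target : IsOpen V
  contDiffOn : ContDiffOn ℝ 2 f U
  injOn : InjOn f U
  image_eq : f '' U = S ∩ V
  injective_fderiv : ∀ x ∈ U, Function.Injective (fderiv ℝ f x)

theorem IsSurface.exists_isChart {S : Set E3} (hS : IsSurface 2 S) {p : E3} (hp : p ∈ S) :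
    ∃ f U V, ∃ x ∈ U, IsChart S f U V ∧ f x = p := by
  obtain ⟨f, U, V, hU, hV, hpV, hf, hinj, himg, himm⟩ := hS p hp
  obtain ⟨x, hx, rfl⟩ : p ∈ f '' U := himg ▸ ⟨hp, hpV⟩
  exact ⟨f, U, V, x, hx, ⟨hU, hV, hf, hinj, himg, himm⟩, rfl⟩

namespace IsChart

variable {S : Set E3} {f : E2 → E3} {U : Set E2} {V : Set E3} {x : E2}

theorem mem (h : IsChart S f U V) (hx : x ∈ U) : f x ∈ S :=
  (h.image_eq ▸ mem_image_of_mem f hx : f x ∈ S ∩ V).1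

theorem mem_target (h : IsChart S f U V) (hx : x ∈ U) : f x ∈ V :=
  (h.image_eq ▸ mem_image_of_mem f hx : f x ∈ S ∩ V).2

theorem contDiffAt (h : IsChart S f U V) (hx : x ∈ U) : ContDiffAt ℝ 2 f x :=
  h.contDiffOn.contDiffAt (h.isOpen_source.mem_nhds hx)

theorem continuousAt (h : IsChart S f U V) (hx : x ∈ U) : ContinuousAt f x :=
  (h.contDiffAt hx).continuousAt

theorem hasStrictFDerivAt (h : IsChart S f U V) (hx : x ∈ U) :
    HasStrictFDerivAt f (fderiv ℝ f x) x :=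
  (h.contDiffAt hx).hasStrictFDerivAt two_ne_zero

theorem hasFDerivAt (h : IsChart S f U V) (hx : x ∈ U) : HasFDerivAt f (fderiv ℝ f x) x :=
  (h.hasStrictFDerivAt hx).hasFDerivAt

theorem eventually_mem (h : IsChart S f U V) (hx : x ∈ U) : ∀ᶠ y in 𝓝 x, f y ∈ S :=
  (h.isOpen_source.eventually_mem hx).mono fun _ => h.mem

theorem isTangentAt (h : IsChart S f U V) (hx : x ∈ U) {w : E3} (hw : w ∈ range (fderiv ℝ f x)) :
    IsTangentAt S (f x) w := by
  obtain ⟨ξ, rfl⟩ := hw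
  have hline : HasDerivAt (fun t : ℝ => x + t • ξ) ξ 0 := by
    simpa using ((hasDerivAt_id (0 : ℝ)).smul_const ξ).const_add x
  have hx' : HasFDerivAt f (fderiv ℝ f x) (x + (0 : ℝ) • ξ) := by simpa using h.hasFDerivAt hx
  have hU : ∀ᶠ t : ℝ in 𝓝 0, x + t • ξ ∈ U :=
    hline.continuousAt.eventually (h.isOpen_source.mem_nhds (by simpa using hx))
  exact .of_eventually (hU.mono fun t => h.mem) (by simp) (hx'.comp_hasDerivAt 0 hline)

end IsChart

end Chart

section LinearAlgebra

variable {G : Type*} [AddCommGroup G] [Module ℝ G]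

theorem exists_eq_smul_add_smul (hG : Module.finrank ℝ G = 2) {a b : G}
    (hab : LinearIndependent ℝ ![a, b]) (v : G) : ∃ s t : ℝ, v = s • a + t • b := by
  have : FiniteDimensional ℝ G := Module.finite_of_finrank_pos (by omega)
  have hspan := hab.span_eq_top_of_card_eq_finrank' (by simp [hG])
  have hv : v ∈ Submodule.span ℝ (range ![a, b]) := hspan ▸ Submodule.mem_top
  simp only [Matrix.range_cons, Matrix.range_empty, union_empty, singleton_union,
    Submodule.mem_span_pair] at hv
  obtain ⟨s, t, hst⟩ := hv
  exact ⟨s, t, hst.symm⟩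

section RankOne

variable {F : Type*} [AddCommGroup F] [Module ℝ F] {L : G →ₗ[ℝ] F} {ζ ξ : G}

theorem linearIndependent_of_map_eq_zero (hζ : ζ ≠ 0) (hLζ : L ζ = 0) (hLξ : L ξ ≠ 0) :
    LinearIndependent ℝ ![ζ, ξ] := by
  rw [LinearIndependent.pair_iff' hζ]
  rintro c rfl
  exact hLξ (by rw [map_smul, hLζ, smul_zero])

theorem exists_map_eq_smul (hG : Module.finrank ℝ G = 2) (hζ : ζ ≠ 0) (hLζ : L ζ = 0)
    (hLξ : L ξ ≠ 0) (v : G) : ∃ c : ℝ, L v = c • L ξ := by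
  obtain ⟨s, t, rfl⟩ :=
    exists_eq_smul_add_smul hG (linearIndependent_of_map_eq_zero hζ hLζ hLξ) v
  exact ⟨t, by rw [map_add, map_smul, map_smul, hLζ, smul_zero, zero_add]⟩

theorem exists_eq_smul_of_map_eq_zero (hG : Module.finrank ℝ G = 2) (hζ : ζ ≠ 0)
    (hLζ : L ζ = 0) (hLξ : L ξ ≠ 0) {v : G} (hv : L v = 0) : ∃ c : ℝ, v = c • ζ := by
  obtain ⟨s, t, rfl⟩ :=
    exists_eq_smul_add_smul hG (linearIndependent_of_map_eq_zero hζ hLζ hLξ) v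
  have ht : t = 0 := by simpa [hLζ, hLξ] using hv
  exact ⟨s, by rw [ht, zero_smul, add_zero]⟩

end RankOne

variable {E : Type*} [NormedAddCommGroup E] [InnerProductSpace ℝ E]

theorem linearIndependent_pair_of_inner_eq_zero {a b : E} (ha : a ≠ 0) (hb : b ≠ 0)
    (hab : ⟪a, b⟫ = 0) : LinearIndependent ℝ ![a, b] := by
  rw [LinearIndependent.pair_iff' ha]
  rintro c rfl
  rw [inner_smul_right, mul_eq_zero, inner_self_eq_zero] at hab
  rcases hab with rfl | rfl
  · exact hb (zero_smul ℝ a)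
  · exact ha rfl

theorem exists_eq_smul_of_inner_eq_zero (hE : Module.finrank ℝ E = 3) {a b y w : E}
    (hab : LinearIndependent ℝ ![a, b]) (hy : y ≠ 0)
    (hay : ⟪a, y⟫ = 0) (hby : ⟪b, y⟫ = 0) (haw : ⟪a, w⟫ = 0) (hbw : ⟪b, w⟫ = 0) :
    ∃ c : ℝ, w = c • y := by
  have : FiniteDimensional ℝ E := FiniteDimensional.of_finrank_pos (by omega)
  let P := Submodule.span ℝ (range ![a, b])
  have hP : Module.finrank ℝ P = 2 := by simpa using finrank_span_eq_card hab
  have hPo : Module.finrank ℝ Pᗮ = 1 := by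
    have := P.finrank_add_finrank_orthogonal
    omega
  have hmem {z : E} (ha : ⟪a, z⟫ = 0) (hb : ⟪b, z⟫ = 0) : z ∈ Pᗮ := by
    rw [show P = Submodule.span ℝ {a} ⊔ Submodule.span ℝ {b} by
      simp [P, Matrix.range_cons, Submodule.span_insert, sup_comm], ← Submodule.inf_orthogonal]
    exact ⟨Submodule.mem_orthogonal_singleton_iff_inner_right.2 ha,
      Submodule.mem_orthogonal_singleton_iff_inner_right.2 hb⟩
  obtain ⟨c, hc⟩ := exists_smul_eq_of_finrank_eq_one hPo (x := ⟨y, hmem hay hby⟩)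
    (by simpa using hy) ⟨w, hmem haw hbw⟩
  exact ⟨c, (congrArg Subtype.val hc).symm⟩

variable [FiniteDimensional ℝ E] {T : E →ₗ[ℝ] E}

theorem eq_zero_of_finrank_range_le_one_of_trace_eq_zero (hT : T.IsSymmetric)
    (htr : LinearMap.trace ℝ E T = 0) (hrank : Module.finrank ℝ (LinearMap.range T) ≤ 1) :
    T = 0 := by
  obtain ⟨⟨w, x₀, rfl⟩, hw⟩ := finrank_le_one_iff.1 hrank
  by_contra hT0
  have hTx₀ : T x₀ ≠ 0 := by
    refine fun h0 => hT0 (LinearMap.ext fun x => ?_)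
    obtain ⟨c, hc⟩ := hw ⟨T x, x, rfl⟩
    simpa [h0] using (congrArg Subtype.val hc).symm
  have hrankOne : T = ((‖T x₀‖ ^ 2)⁻¹ • (innerₛₗ ℝ (T x₀)).comp T).smulRight (T x₀) := by
    ext1 x
    obtain ⟨c, hc⟩ := hw ⟨T x, x, rfl⟩
    have hcx : T x = c • T x₀ := (congrArg Subtype.val hc).symm
    have hnorm : ‖T x₀‖ ^ 2 ≠ 0 := pow_ne_zero 2 (norm_ne_zero_iff.2 hTx₀)
    simp [hcx, inner_smul_right, mul_left_comm _ c, inv_mul_cancel₀ hnorm]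
  have hTT : ⟪T x₀, T (T x₀)⟫ = 0 := by
    rw [hrankOne, LinearMap.trace_smulRight] at htr
    simpa [hTx₀] using htr
  obtain ⟨c, hc⟩ := hw ⟨T (T x₀), T x₀, rfl⟩
  have hcx : T (T x₀) = c • T x₀ := (congrArg Subtype.val hc).symm
  have hTTx₀ : T (T x₀) = 0 := by
    rw [hcx, inner_smul_right, mul_eq_zero, inner_self_eq_zero] at hTT
    rw [hcx, hTT.resolve_right hTx₀, zero_smul]
  exact hTx₀ (inner_self_eq_zero.1 (by rw [hT, hTTx₀, inner_zero_right]))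

theorem exists_eq_smul_of_trace_eq_zero (hE : Module.finrank ℝ E = 3) (hT : T.IsSymmetric)
    (htr : LinearMap.trace ℝ E T = 0) (hT0 : T ≠ 0) {k v : E} (hk : k ≠ 0) (hTk : T k = 0)
    (hTv : T v = 0) : ∃ c : ℝ, v = c • k := by
  by_contra! hv
  have hkv : LinearIndependent ℝ ![(⟨k, hTk⟩ : LinearMap.ker T), ⟨v, hTv⟩] := by
    rw [LinearIndependent.pair_iff' (fun h0 => hk (congrArg Subtype.val h0))]
    exact fun c hc => hv c (congrArg Subtype.val hc).symm
  have hker := hkv.fintype_card_le_finrank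
  rw [Fintype.card_fin] at hker
  have hsum := T.finrank_range_add_finrank_ker
  exact hT0 (eq_zero_of_finrank_range_le_one_of_trace_eq_zero hT htr (by omega))

end LinearAlgebra

section DiffeoBox

variable {E F : Type*} [NormedAddCommGroup E] [NormedSpace ℝ E] [NormedAddCommGroup F]
  [NormedSpace ℝ F] {f : E → F} {e : OpenPartialHomeomorph E F}

/-- The local homeomorphism `e` is a restriction of the map `f` which is a `C¹` diffeomorphism onto
a convex open set: the domain on which the inverse function theorem is used. -/
structure IsDiffeoBox (f : E → F) (e : OpenPartialHomeomorph E F) : Prop where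
  coe_eq : ⇑e = f
  convex_target : Convex ℝ e.target
  injective_fderiv : ∀ y ∈ e.source, Function.Injective (fderiv ℝ f y)
  contDiffAt_symm : ∀ y ∈ e.target, ContDiffAt ℝ 1 e.symm y

namespace IsDiffeoBox

theorem apply_mem_target (h : IsDiffeoBox f e) {y : E} (hy : y ∈ e.source) : f y ∈ e.target :=
  h.coe_eq ▸ e.map_source hy

theorem symm_apply (h : IsDiffeoBox f e) {y : E} (hy : y ∈ e.source) : e.symm (f y) = y :=
  h.coe_eq ▸ e.left_inv hy

theorem apply_symm (h : IsDiffeoBox f e) {y : F} (hy : y ∈ e.target) : f (e.symm y) = y :=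
  h.coe_eq ▸ e.right_inv hy

theorem convex_setOf_add_smul_mem (h : IsDiffeoBox f e) (p d : F) :
    Convex ℝ {t : ℝ | p + t • d ∈ e.target} := by
  have := h.convex_target.affine_preimage (AffineMap.lineMap (k := ℝ) p (p + d))
  simpa [preimage, AffineMap.lineMap_apply, add_comm] using this

end IsDiffeoBox

theorem exists_isDiffeoBox [FiniteDimensional ℝ E] [FiniteDimensional ℝ F] {x : E}
    (hf : ContDiffAt ℝ 1 f x) (hfin : Module.finrank ℝ E = Module.finrank ℝ F)
    (hinj : Function.Injective (fderiv ℝ f x)) {N : Set E} (hN : N ∈ 𝓝 x) :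
    ∃ e, IsDiffeoBox f e ∧ x ∈ e.source ∧ e.source ⊆ N := by
  have toEquiv {y : E} (hy : Function.Injective (fderiv ℝ f y)) :
      ∃ A : E ≃L[ℝ] F, (A : E →L[ℝ] F) = fderiv ℝ f y :=
    ⟨(LinearEquiv.ofInjectiveOfFinrankEq (fderiv ℝ f y).toLinearMap hy
      hfin).toContinuousLinearEquiv, rfl⟩
  obtain ⟨A, hA⟩ := toEquiv hinj
  have hfA : HasFDerivAt f (A : E →L[ℝ] F) x :=
    hA ▸ (hf.differentiableAt one_ne_zero).hasFDerivAt
  obtain ⟨e, he, hxe⟩ : ∃ e : OpenPartialHomeomorph E F, ⇑e = f ∧ x ∈ e.source :=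
    ⟨hf.toOpenPartialHomeomorph f hfA one_ne_zero, hf.toOpenPartialHomeomorph_coe hfA one_ne_zero,
      hf.mem_toOpenPartialHomeomorph_source hfA one_ne_zero⟩
  have hgood : ∀ᶠ y in 𝓝 x, ContDiffAt ℝ 1 f y ∧ Function.Injective (fderiv ℝ f y) ∧ y ∈ N :=
    (hf.eventually (by simp)).and <| ((hf.fderiv_right (m := 0) (by simp)).continuousAt.eventually
      (ContinuousLinearMap.isOpen_injective.mem_nhds hinj)).and hN
  have hsymm : ∀ᶠ y in 𝓝 (e x), y ∈ e.target ∧ ContDiffAt ℝ 1 f (e.symm y) ∧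
      Function.Injective (fderiv ℝ f (e.symm y)) ∧ e.symm y ∈ N :=
    (e.open_target.eventually_mem (e.map_source hxe)).and ((e.tendsto_symm hxe).eventually hgood)
  obtain ⟨R, hR, hball⟩ := Metric.eventually_nhds_iff_ball.1 hsymm
  let e' := (e.symm.restrOpen (Metric.ball (e x) R) Metric.isOpen_ball).symm
  have hsource {y : E} (hy : y ∈ e'.source) : Function.Injective (fderiv ℝ f y) ∧ y ∈ N := by
    have hy' : y ∈ e.source ∧ e y ∈ Metric.ball (e x) R := by simpa [e'] using hy
    simpa only [e.left_inv hy'.1] using (hball (e y) hy'.2).2.2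
  have htarget : e'.target = Metric.ball (e x) R :=
    inter_eq_right.2 fun y hy => (hball y hy).1
  refine ⟨e', ⟨he, htarget ▸ convex_ball _ _, fun y hy => (hsource hy).1, fun y hy => ?_⟩,
    ?_, fun y hy => (hsource hy).2⟩
  · obtain ⟨hy, hfy, hinjy, -⟩ := hball y (htarget ▸ hy)
    obtain ⟨B, hB⟩ := toEquiv hinjy
    exact e.contDiffAt_symm (f₀' := B) hy
      (by rw [he, hB]; exact (hfy.differentiableAt one_ne_zero).hasFDerivAt) (by rwa [he])
  · simpa [e', hxe] using hR

end DiffeoBox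

section Curve

variable {E F : Type*} [NormedAddCommGroup E] [NormedSpace ℝ E] [NormedAddCommGroup F]
  [NormedSpace ℝ F] {f : E → F} {e : OpenPartialHomeomorph E F}

theorem IsDiffeoBox.exists_curve (h : IsDiffeoBox f e) {x : E} (hx : x ∈ e.source)
    (hf : DifferentiableAt ℝ f x) (d : F) :
    ∃ α : ℝ → E, α 0 = x ∧ ContDiffAt ℝ 1 α 0 ∧ fderiv ℝ f x (deriv α 0) = d ∧
      ∀ᶠ t in 𝓝 0, f (α t) = f x + t • d := by
  let line : ℝ → F := fun t => f x + t • d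
  have hline0 : line 0 = f x := by simp [line]
  have hline : ContDiff ℝ 1 line := by fun_prop
  have hx0 : line 0 ∈ e.target := hline0 ▸ h.apply_mem_target hx
  have hα0 : e.symm (line 0) = x := by rw [hline0, h.symm_apply hx]
  have hα : ContDiffAt ℝ 1 (e.symm ∘ line) 0 :=
    (h.contDiffAt_symm _ hx0).comp (0 : ℝ) hline.contDiffAt
  have hfα : f ∘ e.symm ∘ line =ᶠ[𝓝 0] line :=
    (hline.continuous.continuousAt.eventually (e.open_target.mem_nhds hx0)).mono
      fun t ht => h.apply_symm ht
  refine ⟨e.symm ∘ line, hα0, hα, ?_, hfα⟩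
  have hderiv : HasDerivAt (f ∘ e.symm ∘ line) (fderiv ℝ f x (deriv (e.symm ∘ line) 0)) 0 :=
    HasFDerivAt.comp_hasDerivAt_of_eq (0 : ℝ) hf.hasFDerivAt
      (hα.differentiableAt one_ne_zero).hasDerivAt hα0.symm
  have hline' : HasDerivAt line d 0 := by
    simpa only [one_smul] using ((hasDerivAt_id' (0 : ℝ)).smul_const d).const_add (f x)
  exact hderiv.unique (hline'.congr_of_eventuallyEq hfα)

end Curve

section LevelCurve

variable {G F : Type*} [NormedAddCommGroup G] [InnerProductSpace ℝ G] [NormedAddCommGroup F]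
  [InnerProductSpace ℝ F] {g : G → F} {x₀ : G}

theorem hasDerivAt_const_comp_of_inner_const (hG : Module.finrank ℝ G = 2) {α : ℝ → G} {t : ℝ}
    {ξ : G} {w : F} {c : ℝ} (hα : DifferentiableAt ℝ α t) (hg : DifferentiableAt ℝ g (α t))
    (hker : ¬ Function.Injective (fderiv ℝ g (α t))) (hξ : ⟪w, fderiv ℝ g (α t) ξ⟫ ≠ 0)
    (hconst : ∀ᶠ s in 𝓝 t, ⟪w, g (α s)⟫ = c) : HasDerivAt (g ∘ α) 0 t := by
  obtain ⟨ζ, hζ, hζ0⟩ : ∃ ζ, fderiv ℝ g (α t) ζ = 0 ∧ ζ ≠ 0 := by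
    simpa [injective_iff_map_eq_zero] using hker
  have hderiv : HasDerivAt (g ∘ α) (fderiv ℝ g (α t) (deriv α t)) t :=
    hg.hasFDerivAt.comp_hasDerivAt t hα.hasDerivAt
  obtain ⟨b, hb⟩ := exists_map_eq_smul (L := (fderiv ℝ g (α t)).toLinearMap) hG hζ0 hζ
    (ξ := ξ) (fun h0 => hξ (by simp [show fderiv ℝ g (α t) ξ = 0 from h0])) (deriv α t)
  have hinner : ⟪w, fderiv ℝ g (α t) (deriv α t)⟫ = 0 :=
    ((innerSL ℝ w).hasFDerivAt.comp_hasDerivAt t hderiv).unique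
      ((hasDerivAt_const t c).congr_of_eventuallyEq hconst)
  have hb' : fderiv ℝ g (α t) (deriv α t) = b • fderiv ℝ g (α t) ξ := hb
  rw [hb', inner_smul_right] at hinner
  rwa [hb', (mul_eq_zero.1 hinner).resolve_right hξ, zero_smul] at hderiv

theorem injective_inner_prod_inner (hG : Module.finrank ℝ G = 2) {L : G →L[ℝ] F} {ζ ξ : G}
    (hζ0 : ζ ≠ 0) (hζ : L ζ = 0) (hξ : L ξ ≠ 0) :
    Function.Injective (((innerSL ℝ (L ξ)).comp L).prod (innerSL ℝ ζ)) := by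
  rw [injective_iff_map_eq_zero]
  intro v hv
  have hv1 : ⟪L ξ, L v⟫ = 0 := congrArg Prod.fst hv
  have hv2 : ⟪ζ, v⟫ = 0 := congrArg Prod.snd hv
  obtain ⟨b, hb⟩ : ∃ b : ℝ, L v = b • L ξ :=
    exists_map_eq_smul (L := L.toLinearMap) hG hζ0 hζ hξ v
  have hb0 : b = 0 := by simpa [hb, inner_smul_right, hξ] using hv1
  obtain ⟨c, rfl⟩ := exists_eq_smul_of_map_eq_zero (L := L.toLinearMap) hG hζ0 hζ hξ (v := v)
    (show L v = 0 by rw [hb, hb0, zero_smul])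
  simpa [inner_smul_right, hζ0] using hv2

/-- The level curve is `⟪L ξ, g ·⟫ = const`: the derivative of `g` having rank one nearby, all of
`g` is constant along it. -/
theorem exists_levelCurve (hG : Module.finrank ℝ G = 2) (hg : ContDiffAt ℝ 1 g x₀)
    (hne : fderiv ℝ g x₀ ≠ 0) (hker : ∀ᶠ x in 𝓝 x₀, ¬ Function.Injective (fderiv ℝ g x)) :
    ∃ α : ℝ → G, α 0 = x₀ ∧ ContDiffAt ℝ 1 α 0 ∧ deriv α 0 ≠ 0 ∧
      ∀ᶠ t in 𝓝 0, g (α t) = g x₀ := by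
  have : FiniteDimensional ℝ G := Module.finite_of_finrank_pos (by omega)
  obtain ⟨ζ, hζ, hζ0⟩ : ∃ ζ, fderiv ℝ g x₀ ζ = 0 ∧ ζ ≠ 0 := by
    simpa [injective_iff_map_eq_zero] using hker.self_of_nhds
  obtain ⟨ξ, hξ⟩ : ∃ ξ, fderiv ℝ g x₀ ξ ≠ 0 := by
    contrapose! hne
    exact ContinuousLinearMap.ext hne
  set w := fderiv ℝ g x₀ ξ
  let P : G → ℝ × ℝ := fun x => (⟪w, g x⟫, ⟪ζ, x⟫)
  have hP : ContDiffAt ℝ 1 P x₀ :=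
    (contDiffAt_const.inner ℝ hg).prodMk (contDiffAt_const.inner ℝ contDiffAt_id)
  have hPd : HasFDerivAt P (((innerSL ℝ w).comp (fderiv ℝ g x₀)).prod (innerSL ℝ ζ)) x₀ :=
    ((innerSL ℝ w).hasFDerivAt.comp x₀ (hg.differentiableAt one_ne_zero).hasFDerivAt).prodMk
      (innerSL ℝ ζ).hasFDerivAt
  obtain ⟨e, he, hxe, -⟩ := exists_isDiffeoBox hP (by simp [hG])
    (hPd.fderiv ▸ injective_inner_prod_inner hG hζ0 hζ hξ) univ_mem
  obtain ⟨α, hα0, hα, hαd, hPα⟩ := he.exists_curve hxe hPd.differentiableAt (0, 1)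
  refine ⟨α, hα0, hα, fun h0 => by simpa [h0] using congrArg Prod.snd hαd, ?_⟩
  have hinner : ∀ᶠ t in 𝓝 0, ⟪w, g (α t)⟫ = ⟪w, g x₀⟫ :=
    hPα.mono fun t ht => by simpa [P] using congrArg Prod.fst ht
  have hnear : ∀ᶠ x in 𝓝 x₀, ContDiffAt ℝ 1 g x ∧ ¬ Function.Injective (fderiv ℝ g x) ∧
      ⟪w, fderiv ℝ g x ξ⟫ ≠ 0 :=
    (hg.eventually (by simp)).and <| hker.and <| ContinuousAt.eventually_ne
      (continuousAt_const.inner ((hg.fderiv_right (m := 0) (by simp)).continuousAt.clm_apply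
        continuousAt_const)) (inner_self_ne_zero.2 hξ)
  have hderiv : ∀ᶠ t in 𝓝 0, HasDerivAt (g ∘ α) 0 t := by
    filter_upwards [hα.eventually (by simp), hα.continuousAt.eventually (hα0 ▸ hnear),
      hinner.eventually_nhds] with t hαt ⟨hgt, hkert, hξt⟩ ht
    exact hasDerivAt_const_comp_of_inner_const hG (hαt.differentiableAt one_ne_zero)
      (hgt.differentiableAt one_ne_zero) hkert hξt ht
  obtain ⟨δ, hδ, hball⟩ := Metric.eventually_nhds_iff_ball.1 hderiv
  filter_upwards [Metric.ball_mem_nhds (0 : ℝ) hδ] with t ht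
  simpa [hα0] using Metric.isOpen_ball.is_const_of_deriv_eq_zero (convex_ball _ _).isPreconnected
    (fun s hs => (hball s hs).differentiableAt.differentiableWithinAt)
    (fun s hs => (hball s hs).deriv) ht (Metric.mem_ball_self hδ)

end LevelCurve

section Saturated

variable {X : Type*} [TopologicalSpace X]

theorem nonempty_interior_of_saturated {T : Set (X × ℝ)} {B : Set X} {r : ℝ} (hB : IsOpen B)
    (hBne : B.Nonempty) (hr : 0 < r)
    (hclosed : ∀ p ∈ B ×ˢ Ioo (-r) r, p ∉ T → ∀ᶠ p' in 𝓝 p, p' ∉ T)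
    (hsat : ∀ x ∈ B, ∀ s ∈ Ioo (-r) r, ∀ t ∈ Ioo (-r) r, 0 < s * t → (x, s) ∈ T → (x, t) ∈ T)
    (hacc : ∀ x ∈ B, ∃ᶠ p in 𝓝 (x, 0), p ∈ T ∧ p.2 ≠ 0) : (interior T).Nonempty := by
  have fill {I : Set X} (hI : IsOpen I) (hIne : I.Nonempty) (hIB : I ⊆ B) {s : ℝ}
      (hs : s ∈ Ioo (-r) r) (hs0 : s ≠ 0) (hIs : ∀ x ∈ I, (x, s) ∈ T) :
      (interior T).Nonempty := by
    have hJ : IsOpen {t | t ∈ Ioo (-r) r ∧ 0 < s * t} :=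
      isOpen_Ioo.inter (isOpen_lt continuous_const (continuous_const.mul continuous_id))
    obtain ⟨x, hx⟩ := hIne
    refine ⟨(x, s), interior_maximal ?_ (hI.prod hJ) ⟨hx, hs, mul_self_pos.2 hs0⟩⟩
    exact fun p ⟨hp1, hp2, hp3⟩ => hsat p.1 (hIB hp1) s hs p.2 hp2 hp3 (hIs p.1 hp1)
  have hpos : r / 2 ∈ Ioo (-r) r := ⟨by linarith, by linarith⟩
  have hneg : -(r / 2) ∈ Ioo (-r) r := ⟨by linarith, by linarith⟩
  have hslice {x : X} (hx : x ∈ B) {s : ℝ} (hs : s ∈ Ioo (-r) r) (hxs : (x, s) ∉ T) :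
      ∀ᶠ x' in 𝓝 x, (x', s) ∉ T :=
    (Continuous.prodMk_left s).continuousAt.eventually (hclosed (x, s) ⟨hx, hs⟩ hxs)
  have hcover : ∀ x ∈ B, (x, r / 2) ∈ T ∨ (x, -(r / 2)) ∈ T := by
    by_contra! ⟨x, hx, hxpos, hxneg⟩
    have hnear : ∀ᶠ p : X × ℝ in 𝓝 (x, 0), p.1 ∈ B ∧ p.2 ∈ Ioo (-r) r ∧
        (p.1, r / 2) ∉ T ∧ (p.1, -(r / 2)) ∉ T := by
      filter_upwards [continuousAt_fst.eventually (hB.eventually_mem hx),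
        continuousAt_snd.eventually (Ioo_mem_nhds (neg_lt_zero.2 hr) hr),
        continuousAt_fst.eventually (hslice hx hpos hxpos),
        continuousAt_fst.eventually (hslice hx hneg hxneg)]
        with p h1 h2 h3 h4 using ⟨h1, h2, h3, h4⟩
    obtain ⟨⟨x', c⟩, ⟨hT, hc⟩, hx', hcr, hn1, hn2⟩ := ((hacc x hx).and_eventually hnear).exists
    rcases hc.lt_or_gt with hc | hc
    · exact hn2 (hsat x' hx' c hcr _ hneg (mul_pos_of_neg_of_neg hc (by linarith)) hT)
    · exact hn1 (hsat x' hx' c hcr _ hpos (mul_pos hc (by linarith)) hT)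
  by_cases hall : ∀ x ∈ B, (x, r / 2) ∈ T
  · exact fill hB hBne subset_rfl hpos (by linarith) hall
  · push Not at hall
    obtain ⟨x, hx, hxT⟩ := hall
    obtain ⟨I, hI, hIo, hxI⟩ := eventually_nhds_iff.1
      ((hslice hx hpos hxT).and (hB.eventually_mem hx))
    exact fill hIo ⟨x, hxI⟩ (fun y hy => (hI y hy).2) hneg (by linarith)
      fun y hy => (hcover y (hI y hy).2).resolve_left (hI y hy).1

end Saturated

section ChartTopology

variable {S : Set E3} {f : E2 → E3} {U : Set E2} {V : Set E3}

namespace IsChart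

theorem exists_compact_eventually_mem_image (h : IsChart S f U V) (hS : IsClosed S) {N : Set E3}
    (hNS : N ⊆ S ∩ V) (hN : N.Nonempty) :
    ∃ K ⊆ U, IsCompact K ∧ ∃ x ∈ U, f x ∈ N ∧ ∀ᶠ q in 𝓝 (f x), q ∈ N → q ∈ f '' K := by
  obtain ⟨q₀, hq₀⟩ := hN
  obtain ⟨r, hr, hrV⟩ :=
    Metric.nhds_basis_closedBall.mem_iff.1 (h.isOpen_target.mem_nhds (hNS hq₀).2)
  let C := closure (N ∩ Metric.ball q₀ r)
  have hCball : C ⊆ S ∩ Metric.closedBall q₀ r :=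
    closure_minimal (fun q hq => ⟨(hNS hq.1).1, Metric.ball_subset_closedBall hq.2⟩)
      (hS.inter Metric.isClosed_closedBall)
  have hCS : C ⊆ S ∩ V := hCball.trans (inter_subset_inter_right S hrV)
  have : CompleteSpace C := isClosed_closure.completeSpace_coe
  have : Nonempty C := ⟨⟨q₀, subset_closure ⟨hq₀, Metric.mem_ball_self hr⟩⟩⟩
  have : LocallyCompactSpace U := h.isOpen_source.locallyCompactSpace
  obtain ⟨K, hK, hKU⟩ :=
    isSigmaCompact_iff_sigmaCompactSpace.2 (inferInstance : SigmaCompactSpace U)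
  have hKsub (i : ℕ) : K i ⊆ U := hKU ▸ subset_iUnion K i
  obtain ⟨i, c, hci⟩ := nonempty_interior_of_iUnion_of_closed
    (X := C) (f := fun i => ((↑) : C → E3) ⁻¹' (f '' K i))
    (fun i => ((hK i).image_of_continuousOn
      (h.contDiffOn.continuousOn.mono (hKsub i))).isClosed.preimage continuous_subtype_val)
    (by
      rw [← preimage_iUnion, ← image_iUnion, hKU, h.image_eq, eq_univ_iff_forall]
      exact fun c => hCS c.2)
  obtain ⟨_, hOsub, hOopen, hcO⟩ := mem_interior.1 hci
  obtain ⟨O, hO, rfl⟩ := isOpen_induced_iff.1 hOopen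
  obtain ⟨q, hqO, hqN, hqr⟩ := mem_closure_iff.1 c.2 O hO hcO
  obtain ⟨x, hx, rfl⟩ : q ∈ f '' U := h.image_eq ▸ hNS hqN
  refine ⟨K i, hKsub i, hK i, x, hx, hqN, ?_⟩
  filter_upwards [hO.mem_nhds hqO, Metric.isOpen_ball.mem_nhds hqr] with q' hq'O hq'r hq'N
  exact hOsub (a := ⟨q', subset_closure ⟨hq'N, hq'r⟩⟩) hq'O

theorem eventually_mem_image_of_isCompact (h : IsChart S f U V) {K : Set E2} (hK : IsCompact K)
    (hKU : K ⊆ U) {x : E2} (hx : x ∈ U) {B : Set E2} (hB : B ∈ 𝓝 x) :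
    ∀ᶠ q in 𝓝 (f x), q ∈ f '' K → q ∈ f '' B := by
  have hcompact : IsCompact (f '' (K \ interior B)) :=
    (hK.diff isOpen_interior).image_of_continuousOn
      (h.contDiffOn.continuousOn.mono (sdiff_subset.trans hKU))
  have hfx : f x ∉ f '' (K \ interior B) := by
    rintro ⟨y, ⟨hyK, hyB⟩, hyx⟩
    exact hyB (h.injOn (hKU hyK) hx hyx ▸ mem_interior_iff_mem_nhds.2 hB)
  filter_upwards [hcompact.isClosed.isOpen_compl.mem_nhds hfx] with q hq
  rintro ⟨y, hy, rfl⟩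
  by_contra hyB
  exact hq ⟨y, ⟨hy, fun hy' => hyB ⟨y, interior_subset hy', rfl⟩⟩, rfl⟩

end IsChart

end ChartTopology

section Straighten

variable {E : Type*} [NormedAddCommGroup E] [InnerProductSpace ℝ E] {M : E → E} {k y : E}

/-- The acceleration `Dv · v` of the particles moving along the stationary field `v`. -/
def acceleration (v : E → E) (p : E) : E := fderiv ℝ v p (v p)

theorem ne_zero_of_acceleration_ne_zero {v : E → E} {p : E} (h : acceleration v p ≠ 0) :
    v p ≠ 0 := fun h0 => h (by rw [acceleration, h0, map_zero])

theorem continuous_acceleration {v : E → E} (hv : ContDiff ℝ 1 v) :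
    Continuous (acceleration v) :=
  (hv.continuous_fderiv one_ne_zero).clm_apply hv.continuous

/-- When `k` spans the kernel of the symmetric operator `DM y`, this map is a local diffeomorphism
at `y`; it sends a curve along which `M` is constant to a straight segment of direction `k`. -/
def straighten (M : E → E) (k y : E) : E := M y + ⟪k, y⟫ • k

theorem contDiff_straighten (hM : ContDiff ℝ 1 M) (k : E) : ContDiff ℝ 1 (straighten M k) :=
  hM.add ((contDiff_const.inner ℝ contDiff_id).smul contDiff_const)

theorem fderiv_straighten_apply (hM : DifferentiableAt ℝ M y) (k v : E) :
    fderiv ℝ (straighten M k) y v = fderiv ℝ M y v + ⟪k, v⟫ • k := by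
  have h : HasFDerivAt (straighten M k) (fderiv ℝ M y + (innerSL ℝ k).smulRight k) y :=
    hM.hasFDerivAt.add ((innerSL ℝ k).hasFDerivAt.smul_const k)
  simp [h.fderiv]

theorem straighten_eq_add_of_eq {y' : E} (h : M y' = M y) (k : E) :
    straighten M k y' = straighten M k y + ⟪k, y' - y⟫ • k := by
  rw [straighten, straighten, h, inner_sub_right]
  module

theorem straighten_add_smul (hk : ‖k‖ = 1) {t : ℝ} (h : M (y + t • k) = M y) :
    straighten M k (y + t • k) = straighten M k y + t • k := by
  rw [straighten_eq_add_of_eq h, add_sub_cancel_left, inner_smul_right,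
    real_inner_self_eq_norm_sq, hk, one_pow, mul_one]

end Straighten

/-- A `C¹` field on the whole space, for convenience with compact support, which along `S` is
tangent to `S` (that is, to every chart of `S`), irrotational and divergence free. The last two
conditions are recorded as the symmetry and the vanishing trace of the Jacobian. -/
structure IsTangentPotentialField (S : Set E3) (v : E3 → E3) : Prop where
  contDiff : ContDiff ℝ 1 v
  hasCompactSupport : HasCompactSupport v
  isSymmetric : ∀ p ∈ S, (fderiv ℝ v p : E3 →ₗ[ℝ] E3).IsSymmetric
  trace_eq_zero : ∀ p ∈ S, LinearMap.trace ℝ E3 (fderiv ℝ v p : E3 →ₗ[ℝ] E3) = 0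
  mem_range : ∀ f U V, IsChart S f U V → ∀ x ∈ U, v (f x) ∈ range (fderiv ℝ f x)

/-- The sum and the difference `M`, `Q` (in either order) of the two sides of a constrained vortex
sheet on `S`, in the situation to be refuted: by `subset_closure`, neither of them vanishes
identically on a nonempty open subset of `S`. -/
structure IsSumDiffPair (S : Set E3) (M Q : E3 → E3) : Prop where
  isCompact : IsCompact S
  interior_eq_empty : interior S = ∅
  isSurface : IsSurface 2 S
  left : IsTangentPotentialField S M
  right : IsTangentPotentialField S Q
  fderiv_left_apply : ∀ p ∈ S, fderiv ℝ M p (Q p) = 0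
  fderiv_right_apply : ∀ p ∈ S, fderiv ℝ Q p (M p) = 0
  inner_eq_zero : ∀ p ∈ S, ⟪M p, Q p⟫ = 0
  subset_closure : S ⊆ closure {p | p ∈ S ∧ M p ≠ 0 ∧ Q p ≠ 0}

/-- Some regular `C¹` curve in `S` through `q` is a level curve of `M`. -/
def HasLevelCurve (S : Set E3) (M : E3 → E3) (q : E3) : Prop :=
  ∃ γ : ℝ → E3, γ 0 = q ∧ ContDiffAt ℝ 1 γ 0 ∧ deriv γ 0 ≠ 0 ∧
    ∀ᶠ t in 𝓝 0, γ t ∈ S ∧ M (γ t) = M q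

namespace IsSumDiffPair

variable {S : Set E3} {M Q : E3 → E3} {q k z : E3} {e : OpenPartialHomeomorph E3 E3}

theorem symm (h : IsSumDiffPair S M Q) : IsSumDiffPair S Q M where
  isCompact := h.isCompact
  interior_eq_empty := h.interior_eq_empty
  isSurface := h.isSurface
  left := h.right
  right := h.left
  fderiv_left_apply := h.fderiv_right_apply
  fderiv_right_apply := h.fderiv_left_apply
  inner_eq_zero p hp := by rw [real_inner_comm, h.inner_eq_zero p hp]
  subset_closure := h.subset_closure.trans
    (closure_mono fun _ ⟨hp, hM, hQ⟩ => ⟨hp, hQ, hM⟩)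

theorem differentiable_left (h : IsSumDiffPair S M Q) : Differentiable ℝ M :=
  h.left.contDiff.differentiable one_ne_zero

theorem continuous_fderiv_left (h : IsSumDiffPair S M Q) : Continuous (fderiv ℝ M) :=
  h.left.contDiff.continuous_fderiv one_ne_zero

section Kernel

theorem exists_fderiv_eq_zero (h : IsSumDiffPair S M Q) (hq : q ∈ S) :
    ∃ k : E3, ‖k‖ = 1 ∧ fderiv ℝ M q k = 0 ∧ ⟪k, M q⟫ = 0 := by
  let C : Set (E3 × E3) := (S ×ˢ Metric.sphere (0 : E3) 1) ∩
    {p | fderiv ℝ M p.1 p.2 = 0 ∧ ⟪p.2, M p.1⟫ = 0}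
  have hC : IsCompact C := (h.isCompact.prod (isCompact_sphere _ _)).inter_right <|
    (isClosed_eq ((h.continuous_fderiv_left.comp continuous_fst).clm_apply continuous_snd)
      continuous_const).inter
    (isClosed_eq (continuous_snd.inner (h.left.contDiff.continuous.comp continuous_fst))
      continuous_const)
  have hsub : {p | p ∈ S ∧ M p ≠ 0 ∧ Q p ≠ 0} ⊆ Prod.fst '' C := by
    rintro p ⟨hp, -, hQ⟩
    refine ⟨(p, ‖Q p‖⁻¹ • Q p), ⟨⟨hp, ?_⟩, ?_, ?_⟩, rfl⟩
    · simp [norm_smul, hQ]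
    · simp [h.fderiv_left_apply p hp]
    · simp [inner_smul_left, h.symm.inner_eq_zero p hp]
  obtain ⟨⟨p, k⟩, ⟨⟨-, hk⟩, hker, horth⟩, rfl⟩ :=
    (hC.image continuous_fst).isClosed.closure_subset_iff.2 hsub (h.subset_closure hq)
  exact ⟨k, by simpa using hk, hker, horth⟩

theorem inner_fderiv_eq_zero (h : IsSumDiffPair S M Q) (hq : q ∈ S) (hTk : fderiv ℝ M q k = 0)
    (v : E3) : ⟪k, fderiv ℝ M q v⟫ = 0 :=
  (h.left.isSymmetric q hq k v).symm.trans (by simp [hTk])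

theorem exists_eq_smul_of_fderiv_eq_zero (h : IsSumDiffPair S M Q) (hq : q ∈ S)
    (hW : acceleration M q ≠ 0) (hk : k ≠ 0) (hTk : fderiv ℝ M q k = 0) {v : E3}
    (hTv : fderiv ℝ M q v = 0) : ∃ c : ℝ, v = c • k := by
  refine exists_eq_smul_of_trace_eq_zero (T := (fderiv ℝ M q).toLinearMap) (by simp)
    (h.left.isSymmetric q hq) (h.left.trace_eq_zero q hq) (fun h0 => hW ?_) hk hTk hTv
  exact LinearMap.congr_fun h0 (M q)

theorem inner_eq_zero_of_fderiv_eq_zero (h : IsSumDiffPair S M Q) (hq : q ∈ S)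
    (hW : acceleration M q ≠ 0) (hTk : fderiv ℝ M q k = 0) : ⟪k, M q⟫ = 0 := by
  obtain ⟨k', hk', hTk', horth⟩ := h.exists_fderiv_eq_zero hq
  obtain ⟨c, rfl⟩ :=
    h.exists_eq_smul_of_fderiv_eq_zero hq hW (norm_ne_zero_iff.1 (hk' ▸ one_ne_zero)) hTk' hTk
  rw [inner_smul_left, horth, mul_zero]

theorem injective_fderiv_straighten (h : IsSumDiffPair S M Q) (hq : q ∈ S)
    (hW : acceleration M q ≠ 0) (hk : k ≠ 0) (hTk : fderiv ℝ M q k = 0) :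
    Function.Injective (fderiv ℝ (straighten M k) q) := by
  rw [injective_iff_map_eq_zero]
  intro v hv
  rw [fderiv_straighten_apply (h.differentiable_left q)] at hv
  have hkv : ⟪k, v⟫ = 0 := by
    have := congrArg (⟪k, ·⟫) hv
    simpa [inner_add_right, h.inner_fderiv_eq_zero hq hTk, inner_smul_right, hk] using this
  rw [hkv, zero_smul, add_zero] at hv
  obtain ⟨c, rfl⟩ := h.exists_eq_smul_of_fderiv_eq_zero hq hW hk hTk hv
  simpa [inner_smul_right, hk] using hkv

theorem exists_isDiffeoBox_straighten (h : IsSumDiffPair S M Q) (hq : q ∈ S)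
    (hW : acceleration M q ≠ 0) (hk : k ≠ 0) (hTk : fderiv ℝ M q k = 0) {N : Set E3}
    (hN : N ∈ 𝓝 q) : ∃ e, IsDiffeoBox (straighten M k) e ∧ q ∈ e.source ∧ e.source ⊆ N :=
  exists_isDiffeoBox (contDiff_straighten h.left.contDiff k).contDiffAt rfl
    (h.injective_fderiv_straighten hq hW hk hTk) hN

end Kernel

section Saturation

theorem eventually_symm_mem (h : IsSumDiffPair S M Q) (he : IsDiffeoBox (straighten M k) e)
    (hq : q ∈ e.source) (hcurve : HasLevelCurve S M q) :
    ∀ᶠ t in 𝓝 (0 : ℝ), e.symm (straighten M k q + t • k) ∈ S ∧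
      M (e.symm (straighten M k q + t • k)) = M q := by
  obtain ⟨γ, rfl, hγ, hγ', hγS⟩ := hcurve
  have hγd : HasStrictDerivAt γ (deriv γ 0) 0 := hγ.hasStrictDerivAt one_ne_zero
  have hDM : fderiv ℝ M (γ 0) (deriv γ 0) = 0 :=
    ((h.differentiable_left _).hasFDerivAt.comp_hasDerivAt 0 hγd.hasDerivAt).unique
      ((hasDerivAt_const (0 : ℝ) (M (γ 0))).congr_of_eventuallyEq (hγS.mono fun t ht => ht.2))
  have hkγ : ⟪k, deriv γ 0⟫ ≠ 0 := fun h0 =>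
    hγ' ((injective_iff_map_eq_zero _).1 (he.injective_fderiv _ hq) _ (by
      rw [fderiv_straighten_apply (h.differentiable_left _), hDM, h0, zero_smul, add_zero]))
  have hheight : HasStrictDerivAt (fun t => ⟪k, γ t - γ 0⟫) ⟪k, deriv γ 0⟫ 0 :=
    (innerSL ℝ k).hasStrictFDerivAt.comp_hasStrictDerivAt (f := fun t => γ t - γ 0) 0
      (hγd.sub_const (γ 0))
  have hmap := hheight.map_nhds_eq hkγ
  rw [sub_self, inner_zero_right] at hmap
  have himage := image_mem_map (m := fun t => ⟪k, γ t - γ 0⟫)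
    (hγS.and (hγ.continuousAt.eventually (e.open_source.mem_nhds hq)))
  rw [hmap] at himage
  filter_upwards [himage]
  rintro _ ⟨t, ⟨⟨htS, htM⟩, hte⟩, rfl⟩
  simp only [← straighten_eq_add_of_eq htM, he.symm_apply hte]
  exact ⟨htS, htM⟩

theorem symm_mem_of_isPreconnected (h : IsSumDiffPair S M Q)
    (he : IsDiffeoBox (straighten M k) e) {J : Set ℝ} (hJ : IsPreconnected J) {p : E3}
    (hbox : ∀ t ∈ J, p + t • k ∈ e.target)
    (hcurve : ∀ t ∈ J, e.symm (p + t • k) ∈ S → HasLevelCurve S M (e.symm (p + t • k)))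
    {s t : ℝ} (hs : s ∈ J) (hsS : e.symm (p + s • k) ∈ S) (ht : t ∈ J) :
    e.symm (p + t • k) ∈ S ∧ M (e.symm (p + t • k)) = M (e.symm (p + s • k)) := by
  have : PreconnectedSpace J := Subtype.preconnectedSpace hJ
  have hcont : Continuous fun t : J => e.symm (p + (t : ℝ) • k) :=
    e.continuousOn_symm.comp_continuous (by fun_prop) fun t => hbox t t.2
  let P : Set J := {t | e.symm (p + (t : ℝ) • k) ∈ S ∧
    M (e.symm (p + (t : ℝ) • k)) = M (e.symm (p + s • k))}
  have hclosed : IsClosed P := (h.isCompact.isClosed.preimage hcont).inter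
    (isClosed_eq (h.left.contDiff.continuous.comp hcont) continuous_const)
  have hopen : IsOpen P := by
    rw [isOpen_iff_mem_nhds]
    rintro ⟨t, ht⟩ ⟨htS, htM⟩
    have hnear := h.eventually_symm_mem he (e.map_target (hbox t ht)) (hcurve t ht htS)
    rw [he.apply_symm (hbox t ht)] at hnear
    have hsub : Tendsto (fun u : J => (u : ℝ) - t) (𝓝 ⟨t, ht⟩) (𝓝 0) := by
      have : ContinuousAt (fun u : J => (u : ℝ) - t) ⟨t, ht⟩ := by fun_prop
      simpa [ContinuousAt] using this
    filter_upwards [hsub.eventually hnear] with u hu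
    have hpu : p + t • k + ((u : ℝ) - t) • k = p + (u : ℝ) • k := by module
    rw [hpu] at hu
    exact ⟨hu.1, hu.2.trans htM⟩
  have huniv : P = univ := IsClopen.eq_univ ⟨hclosed, hopen⟩ ⟨⟨s, hs⟩, hsS, rfl⟩
  exact (huniv ▸ mem_univ (⟨t, ht⟩ : J) : (⟨t, ht⟩ : J) ∈ P)

theorem symm_mem (h : IsSumDiffPair S M Q) (he : IsDiffeoBox (straighten M k) e)
    (hcurve : ∀ q ∈ e.source, q ∈ S → HasLevelCurve S M q) (hq : q ∈ e.source) (hqS : q ∈ S)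
    {t : ℝ} (ht : straighten M k q + t • k ∈ e.target) :
    e.symm (straighten M k q + t • k) ∈ S ∧ M (e.symm (straighten M k q + t • k)) = M q := by
  have hq0 : e.symm (straighten M k q + (0 : ℝ) • k) = q := by simpa using he.symm_apply hq
  have := h.symm_mem_of_isPreconnected he
    (he.convex_setOf_add_smul_mem (straighten M k q) k).isPreconnected (fun _ hs => hs)
    (fun s hs => hcurve _ (e.map_target hs)) (s := 0) (by simpa using he.apply_mem_target hq)
    (hq0.symm ▸ hqS) ht
  rwa [hq0] at this

end Saturation

variable {f : E2 → E3} {U : Set E2} {V : Set E3} {x : E2}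

section Tangency

theorem contDiffAt_comp_chart (h : IsSumDiffPair S M Q) (hc : IsChart S f U V) (hx : x ∈ U) :
    ContDiffAt ℝ 1 (M ∘ f) x :=
  h.left.contDiff.contDiffAt.comp x ((hc.contDiffAt hx).of_le one_le_two)

theorem fderiv_comp_chart_apply (h : IsSumDiffPair S M Q) (hc : IsChart S f U V) (hx : x ∈ U)
    (ζ : E2) : fderiv ℝ (M ∘ f) x ζ = fderiv ℝ M (f x) (fderiv ℝ f x ζ) := by
  rw [fderiv_comp x (h.differentiable_left _) (hc.hasFDerivAt hx).differentiableAt]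
  rfl

theorem eventually_injective_fderiv_comp_chart (h : IsSumDiffPair S M Q) (hc : IsChart S f U V)
    (hx : x ∈ U) (hinj : Function.Injective (fderiv ℝ (M ∘ f) x)) :
    ∀ᶠ y in 𝓝 x, Function.Injective (fderiv ℝ (M ∘ f) y) :=
  (((h.contDiffAt_comp_chart hc hx).fderiv_right (m := 0) (by simp)).continuousAt).eventually
    (ContinuousLinearMap.isOpen_injective.mem_nhds hinj)

theorem not_injective_fderiv_comp_chart_of_ne_zero (h : IsSumDiffPair S M Q)
    (hc : IsChart S f U V) (hx : x ∈ U) (hQ : Q (f x) ≠ 0) :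
    ¬ Function.Injective (fderiv ℝ (M ∘ f) x) := by
  obtain ⟨ζ, hζ⟩ := h.right.mem_range f U V hc x hx
  intro hinj
  have hζ0 : ζ = 0 := (injective_iff_map_eq_zero _).1 hinj ζ <| by
    rw [h.fderiv_comp_chart_apply hc hx, hζ, h.fderiv_left_apply _ (hc.mem hx)]
  exact hQ (by rw [← hζ, hζ0, map_zero])

theorem hasLevelCurve_of_eventually_not_injective (h : IsSumDiffPair S M Q)
    (hc : IsChart S f U V) (hx : x ∈ U) (hW : acceleration M (f x) ≠ 0)
    (hker : ∀ᶠ y in 𝓝 x, ¬ Function.Injective (fderiv ℝ (M ∘ f) y)) :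
    HasLevelCurve S M (f x) := by
  have hne : fderiv ℝ (M ∘ f) x ≠ 0 := by
    obtain ⟨ξ, hξ⟩ := h.left.mem_range f U V hc x hx
    intro h0
    have := h.fderiv_comp_chart_apply hc hx ξ
    rw [h0, hξ] at this
    exact hW this.symm
  obtain ⟨α, rfl, hα, hα', hMα⟩ :=
    exists_levelCurve (by simp) (h.contDiffAt_comp_chart hc hx) hne hker
  have hderiv : HasDerivAt (f ∘ α) (fderiv ℝ f (α 0) (deriv α 0)) 0 :=
    (hc.hasFDerivAt hx).comp_hasDerivAt 0 (hα.differentiableAt one_ne_zero).hasDerivAt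
  refine ⟨f ∘ α, rfl, ((hc.contDiffAt hx).of_le one_le_two).comp (0 : ℝ) hα, fun h0 => hα' ?_,
    (hα.continuousAt.eventually (hc.eventually_mem hx)).and hMα⟩
  rw [hderiv.deriv] at h0
  exact (injective_iff_map_eq_zero _).1 (hc.injective_fderiv _ hx) _ h0

end Tangency

section Transversality

theorem injective_fderiv_transverse (h : IsSumDiffPair S M Q) (hc : IsChart S f U V) (hx : x ∈ U)
    (hinj : Function.Injective (fderiv ℝ (M ∘ f) x)) (hk : k ≠ 0)
    (hTk : fderiv ℝ M (f x) k = 0) :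
    Function.Injective
      (fderiv ℝ (fun p : E2 × ℝ => straighten M k (f p.1) + p.2 • k) (x, 0)) := by
  have hst := (contDiff_straighten h.left.contDiff k).differentiable one_ne_zero (f x)
  have hsheet : HasFDerivAt (fun y => straighten M k (f y))
      ((fderiv ℝ (straighten M k) (f x)).comp (fderiv ℝ f x)) x :=
    hst.hasFDerivAt.comp x (hc.hasFDerivAt hx)
  have hderiv : HasFDerivAt (fun p : E2 × ℝ => straighten M k (f p.1) + p.2 • k)
      (((fderiv ℝ (straighten M k) (f x)).comp (fderiv ℝ f x)).comp
        (ContinuousLinearMap.fst ℝ E2 ℝ) + (ContinuousLinearMap.snd ℝ E2 ℝ).smulRight k)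
      (x, 0) :=
    (HasFDerivAt.comp (x, (0 : ℝ)) (g := fun y => straighten M k (f y)) hsheet
      hasFDerivAt_fst).add
      ((ContinuousLinearMap.snd ℝ E2 ℝ).smulRight k).hasFDerivAt
  rw [injective_iff_map_eq_zero]
  rintro ⟨ζ, c⟩ h0
  have hsum : fderiv ℝ M (f x) (fderiv ℝ f x ζ) + (⟪k, fderiv ℝ f x ζ⟫ + c) • k = 0 := by
    rw [add_smul, ← add_assoc, ← fderiv_straighten_apply (h.differentiable_left _), ← h0]
    exact (DFunLike.congr_fun hderiv.fderiv (ζ, c)).symm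
  have hcoef : ⟪k, fderiv ℝ f x ζ⟫ + c = 0 := by
    have := congrArg (⟪k, ·⟫) hsum
    simpa [inner_add_right, h.inner_fderiv_eq_zero (hc.mem hx) hTk, inner_smul_right, hk]
      using this
  rw [hcoef, zero_smul, add_zero, ← h.fderiv_comp_chart_apply hc hx] at hsum
  obtain rfl := (injective_iff_map_eq_zero _).1 hinj ζ hsum
  simpa using hcoef

theorem exists_transverseChart (h : IsSumDiffPair S M Q) (hc : IsChart S f U V) (hx : x ∈ U)
    (hW : acceleration M (f x) ≠ 0) (hinj : Function.Injective (fderiv ℝ (M ∘ f) x)) :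
    ∃ ψ : OpenPartialHomeomorph (E2 × ℝ) E3, (x, (0 : ℝ)) ∈ ψ.source ∧
      (∀ᶠ y in 𝓝 x, ψ (y, 0) = f y) ∧
      ∀ y s t, (∀ u ∈ uIcc s t, (y, u) ∈ ψ.source) →
        (∀ u ∈ uIcc s t, ψ (y, u) ∈ S → HasLevelCurve S M (ψ (y, u))) →
        ψ (y, s) ∈ S → ψ (y, t) ∈ S := by
  obtain ⟨k, hk, hTk, -⟩ := h.exists_fderiv_eq_zero (hc.mem hx)
  have hk0 : k ≠ 0 := norm_ne_zero_iff.1 (hk ▸ one_ne_zero)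
  obtain ⟨e, he, hxe, -⟩ := h.exists_isDiffeoBox_straighten (hc.mem hx) hW hk0 hTk univ_mem
  have hst : ContDiffAt ℝ 1 (straighten M k ∘ f) x :=
    (contDiff_straighten h.left.contDiff k).contDiffAt.comp x
      ((hc.contDiffAt hx).of_le one_le_two)
  obtain ⟨e', he', hxe', -⟩ := exists_isDiffeoBox
    (f := fun p : E2 × ℝ => straighten M k (f p.1) + p.2 • k) (x := (x, 0))
    ((ContDiffAt.comp (x, (0 : ℝ)) (g := straighten M k ∘ f) hst contDiffAt_fst).add
      (contDiffAt_snd.smul contDiffAt_const))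
    (by simp) (h.injective_fderiv_transverse hc hx hinj hk0 hTk) univ_mem
  have hψ (p : E2 × ℝ) : (e'.trans e.symm) p = e.symm (straighten M k (f p.1) + p.2 • k) :=
    congrArg e.symm (congrFun he'.coe_eq p)
  have hsource {p : E2 × ℝ} (hp : p ∈ (e'.trans e.symm).source) :
      straighten M k (f p.1) + p.2 • k ∈ e.target := by
    have : e' p ∈ e.target := hp.2
    rwa [he'.coe_eq] at this
  refine ⟨e'.trans e.symm, ⟨hxe', ?_⟩, ?_, fun y s t hst hcurve hs => ?_⟩
  · simpa [he'.coe_eq] using he.apply_mem_target hxe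
  · filter_upwards [(hc.continuousAt hx).eventually (e.open_source.mem_nhds hxe)] with y hy
    rw [hψ, zero_smul, add_zero, he.symm_apply hy]
  · simp only [hψ] at hcurve hs ⊢
    exact (h.symm_mem_of_isPreconnected he isPreconnected_uIcc (fun u hu => hsource (hst u hu))
      hcurve left_mem_uIcc hs right_mem_uIcc).1

theorem frequently_mem_of_injective (h : IsSumDiffPair S M Q) (hc : IsChart S f U V)
    {ψ : OpenPartialHomeomorph (E2 × ℝ) E3} (hxψ : (x, (0 : ℝ)) ∈ ψ.source)
    (hψ : ∀ᶠ y in 𝓝 x, y ∈ U ∧ Function.Injective (fderiv ℝ (M ∘ f) y) ∧ ψ (y, 0) = f y) :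
    ∃ᶠ p in 𝓝 (x, (0 : ℝ)), (p ∈ ψ.source ∧ ψ p ∈ S) ∧ p.2 ≠ 0 := by
  obtain ⟨hxU, -, hx0⟩ := hψ.self_of_nhds
  have hfreq : ∃ᶠ g in 𝓝 (ψ (x, 0)), g ∈ S ∧ Q g ≠ 0 :=
    (mem_closure_iff_frequently.1 (h.subset_closure (hx0 ▸ hc.mem hxU))).mono
      fun g hg => ⟨hg.1, hg.2.2⟩
  have hsymm : Tendsto ψ.symm (𝓝 (ψ (x, 0))) (𝓝 (x, 0)) := ψ.tendsto_symm hxψ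
  refine hsymm.frequently ((hfreq.and_eventually ((ψ.open_target.eventually_mem
    (ψ.map_source hxψ)).and (hsymm.eventually (continuousAt_fst.eventually hψ)))).mono ?_)
  rintro g ⟨⟨hgS, hgQ⟩, hg, hgU, hginj, hgf⟩
  refine ⟨⟨ψ.map_target hg, by rwa [ψ.right_inv hg]⟩, fun h0 => ?_⟩
  have hgx : f (ψ.symm g).1 = g := by
    rw [← hgf, ← h0, ψ.right_inv hg]
  exact h.not_injective_fderiv_comp_chart_of_ne_zero hc hgU (hgx.symm ▸ hgQ) hginj

/-- The level curves sweep out, on one side of the sheet at least, an open subset of the space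
contained in `S`. -/
theorem nonempty_interior_of_transverseChart (h : IsSumDiffPair S M Q) (hc : IsChart S f U V)
    {ψ : OpenPartialHomeomorph (E2 × ℝ) E3}
    (hψS : ∀ y s t, (∀ u ∈ uIcc s t, (y, u) ∈ ψ.source) →
      (∀ u ∈ uIcc s t, ψ (y, u) ∈ S → HasLevelCurve S M (ψ (y, u))) → ψ (y, s) ∈ S → ψ (y, t) ∈ S)
    (hbox : ∀ᶠ p in 𝓝 (x, (0 : ℝ)), p ∈ ψ.source ∧ (∀ᶠ y in 𝓝 p.1, y ∈ U ∧
      Function.Injective (fderiv ℝ (M ∘ f) y) ∧ ψ (y, 0) = f y) ∧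
      (ψ p ∈ S → p.2 ≠ 0 → HasLevelCurve S M (ψ p))) :
    (interior S).Nonempty := by
  obtain ⟨r, hr, hball⟩ := Metric.eventually_nhds_iff_ball.1 hbox
  replace hball : ∀ p ∈ Metric.ball x r ×ˢ Ioo (-r) r, _ := fun p hp =>
    hball p (by simpa [← ball_prod_same, Real.ball_eq_Ioo] using hp)
  have hmem {y : E2} (hy : y ∈ Metric.ball x r) {s t : ℝ} (hs : s ∈ Ioo (-r) r)
      (ht : t ∈ Ioo (-r) r) (u : ℝ) (hu : u ∈ uIcc s t) :=
    hball (y, u) ⟨hy, ordConnected_Ioo.uIcc_subset hs ht hu⟩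
  obtain ⟨p, hp⟩ := nonempty_interior_of_saturated (T := ψ.source ∩ ψ ⁻¹' S) Metric.isOpen_ball
    (Metric.nonempty_ball.2 hr) hr
    (fun p hp hpT => ((ψ.continuousAt (hball p hp).1).eventually
      (h.isCompact.isClosed.isOpen_compl.mem_nhds fun hpS => hpT ⟨(hball p hp).1, hpS⟩)).mono
      fun p' hp' hpT' => hp' hpT'.2)
    (fun y hy s hs t ht hst hyT => by
      have hne (u) (hu : u ∈ uIcc s t) : u ≠ 0 := by
        rintro rfl
        rcases mem_uIcc.1 hu with hu | hu <;> nlinarith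
      exact ⟨(hball (y, t) ⟨hy, ht⟩).1, hψS y s t (fun u hu => (hmem hy hs ht u hu).1)
        (fun u hu hyu => (hmem hy hs ht u hu).2.2 hyu (hne u hu)) hyT.2⟩)
    (fun y hy => by
      have hy0 := hball (y, 0) ⟨hy, by simpa using hr⟩
      exact h.frequently_mem_of_injective hc hy0.1 hy0.2.1)
  exact ⟨ψ p, interior_maximal (image_subset_iff.2 fun p hp => (interior_subset hp).2)
    (ψ.isOpen_image_of_subset_source isOpen_interior fun p hp => (interior_subset hp).1)
    (mem_image_of_mem ψ hp)⟩

theorem not_injective_fderiv_comp_chart_of_eventually (h : IsSumDiffPair S M Q)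
    (hc : IsChart S f U V) (hx : x ∈ U) (hW : acceleration M (f x) ≠ 0)
    (hS : ∀ B ∈ 𝓝 x, ∀ᶠ q in 𝓝 (f x), q ∈ S → HasLevelCurve S M q ∨ q ∈ f '' B) :
    ¬ Function.Injective (fderiv ℝ (M ∘ f) x) := by
  intro hinj
  obtain ⟨ψ, hxψ, hψf, hψS⟩ := h.exists_transverseChart hc hx hW hinj
  have hsheet : ∀ᶠ y in 𝓝 x, (y ∈ U ∧ Function.Injective (fderiv ℝ (M ∘ f) y) ∧
      ψ (y, 0) = f y) ∧ (y, (0 : ℝ)) ∈ ψ.source :=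
    ((hc.isOpen_source.eventually_mem hx).and
      ((h.eventually_injective_fderiv_comp_chart hc hx hinj).and hψf)).and
    ((Continuous.prodMk_left (0 : ℝ)).continuousAt.eventually (ψ.open_source.mem_nhds hxψ))
  have hcurve := (ψ.continuousAt hxψ).eventually (hψf.self_of_nhds.symm ▸ hS _ hsheet)
  refine (h.nonempty_interior_of_transverseChart (x := x) hc hψS ?_).ne_empty h.interior_eq_empty
  filter_upwards [ψ.open_source.mem_nhds hxψ, hcurve,
    continuousAt_fst.eventually hsheet.eventually_nhds] with p hp hpS hpx
  refine ⟨hp, hpx.mono fun _ hy => hy.1, fun hpS' hp0 => (hpS hpS').resolve_right ?_⟩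
  rintro ⟨y, ⟨⟨-, -, hyf⟩, hyψ⟩, hyp⟩
  exact hp0 (congrArg Prod.snd (ψ.injOn hp hyψ (hyp.symm.trans hyf.symm)))

theorem hasLevelCurve (h : IsSumDiffPair S M Q) {q : E3} (hq : q ∈ S)
    (hW : acceleration M q ≠ 0) : HasLevelCurve S M q := by
  by_contra hcurve
  obtain ⟨f, U, V, x₀, hx₀, hc, rfl⟩ := h.isSurface.exists_isChart hq
  have hWopen : IsOpen {q | acceleration M q ≠ 0} :=
    isOpen_ne.preimage (continuous_acceleration h.left.contDiff)
  obtain ⟨K, hKU, hK, x₁, hx₁, ⟨⟨-, hx₁V⟩, hx₁W, hx₁c⟩, hev⟩ :=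
    hc.exists_compact_eventually_mem_image h.isCompact.isClosed
      (N := {q | q ∈ S ∩ V ∧ acceleration M q ≠ 0 ∧ ¬ HasLevelCurve S M q}) (fun q hq => hq.1)
      ⟨f x₀, ⟨hq, hc.mem_target hx₀⟩, hW, hcurve⟩
  have hfreq : ∃ᶠ x in 𝓝 x₁, Function.Injective (fderiv ℝ (M ∘ f) x) :=
    fun hker => hx₁c (h.hasLevelCurve_of_eventually_not_injective hc hx₁ hx₁W hker)
  have hnear : ∀ᶠ q in 𝓝 (f x₁), acceleration M q ≠ 0 ∧
      (q ∈ S → HasLevelCurve S M q ∨ q ∈ f '' K) := by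
    filter_upwards [hev, hWopen.mem_nhds hx₁W, hc.isOpen_target.mem_nhds hx₁V]
      with q hqK hqW hqV
    refine ⟨hqW, fun hqS => or_iff_not_imp_left.2 fun hqc => hqK ⟨⟨hqS, hqV⟩, hqW, hqc⟩⟩
  obtain ⟨x₂, hinj, hx₂U, hx₂⟩ := (hfreq.and_eventually ((hc.isOpen_source.eventually_mem hx₁).and
    ((hc.continuousAt hx₁).eventually hnear.eventually_nhds))).exists
  refine h.not_injective_fderiv_comp_chart_of_eventually hc hx₂U hx₂.self_of_nhds.1
    (fun B hB => ?_) hinj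
  filter_upwards [hx₂, hc.eventually_mem_image_of_isCompact hK hKU hx₂U hB] with q hq hqB hqS
  exact (hq.2 hqS).imp_right hqB

theorem not_injective_fderiv_comp_chart (h : IsSumDiffPair S M Q) (hc : IsChart S f U V)
    (hx : x ∈ U) (hW : acceleration M (f x) ≠ 0) :
    ¬ Function.Injective (fderiv ℝ (M ∘ f) x) := by
  have hWopen : IsOpen {q | acceleration M q ≠ 0} :=
    isOpen_ne.preimage (continuous_acceleration h.left.contDiff)
  refine h.not_injective_fderiv_comp_chart_of_eventually hc hx hW fun B _ => ?_
  filter_upwards [hWopen.mem_nhds hW] with q hqW hqS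
  exact Or.inl (h.hasLevelCurve hqS hqW)

end Transversality

end IsSumDiffPair

theorem fderiv_apply_eq_zero_of_eventually_smul_eq {G F : Type*} [NormedAddCommGroup G]
    [NormedSpace ℝ G] [NormedAddCommGroup F] [NormedSpace ℝ F] {v e : G → F} {φ : F →L[ℝ] ℝ}
    {x θ : G} {c : ℝ} (hv : DifferentiableAt ℝ v x) (he : DifferentiableAt ℝ e x)
    (hve : ∀ᶠ y in 𝓝 x, φ (v y) • e y = v y) (hφ : φ (v x) ≠ 0)
    (hθ : fderiv ℝ v x θ = c • v x) : fderiv ℝ e x θ = 0 := by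
  have hprod := ((φ.hasFDerivAt.comp x hv.hasFDerivAt).smul he.hasFDerivAt).congr_of_eventuallyEq
    (hve.mono fun y hy => hy.symm)
  have heq := DFunLike.congr_fun (hv.hasFDerivAt.unique hprod) θ
  have hsum : c • v x = φ (v x) • fderiv ℝ e x θ + (c * φ (v x)) • e x := by
    simpa [hθ] using heq
  rw [mul_smul, hve.self_of_nhds] at hsum
  simpa [hφ] using hsum

/-- The chart `f` covers a neighbourhood of `f x` in `S`. A sheet of `S` may also be a limit of
other sheets, so this is not automatic for a chart. -/
def CoversAt (S : Set E3) (f : E2 → E3) (x : E2) : Prop := 𝓝[S] (f x) ≤ (𝓝 x).map f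

section CoversAt

variable {S : Set E3} {f : E2 → E3} {U : Set E2} {V : Set E3} {x : E2}

theorem CoversAt.eventually_exists (h : CoversAt S f x) {P : E2 → Prop} (hP : ∀ᶠ y in 𝓝 x, P y) :
    ∀ᶠ q in 𝓝[S] (f x), ∃ y, P y ∧ f y = q :=
  h (image_mem_map hP)

theorem IsChart.coversAt_of_isCompact (hc : IsChart S f U V) {K : Set E2} (hK : IsCompact K)
    (hKU : K ⊆ U) (hx : x ∈ U) (h : ∀ᶠ q in 𝓝[S] (f x), q ∈ f '' K) : CoversAt S f x := by
  intro C hC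
  filter_upwards [h, nhdsWithin_le_nhds (hc.eventually_mem_image_of_isCompact hK hKU hx hC)]
    with q hqK hq
  obtain ⟨y, hy, rfl⟩ := hq hqK
  exact hy

theorem CoversAt.eventually (h : CoversAt S f x) (hc : IsChart S f U V) (hx : x ∈ U) :
    ∀ᶠ y in 𝓝 x, CoversAt S f y := by
  obtain ⟨r, hr, hrU⟩ := Metric.nhds_basis_closedBall.mem_iff.1 (hc.isOpen_source.mem_nhds hx)
  have hball := h (image_mem_map (Metric.closedBall_mem_nhds x hr))
  rw [mem_nhdsWithin_iff_eventually] at hball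
  filter_upwards [(hc.continuousAt hx).eventually hball.eventually_nhds,
    hc.isOpen_source.mem_nhds hx] with y hy hyU
  exact hc.coversAt_of_isCompact (isCompact_closedBall x r) hrU hyU
    (mem_nhdsWithin_iff_eventually.2 hy)

end CoversAt

/-- The tangent direction of the chart `f` perpendicular to `M`, obtained from the coordinate
direction `a` and normalized by `⟪k, ·⟫ = 1`. -/
def transverseField (M : E3 → E3) (f : E2 → E3) (a : E2) (k : E3) (x : E2) : E3 :=
  let e := fderiv ℝ f x a - (⟪fderiv ℝ f x a, M (f x)⟫ / ⟪M (f x), M (f x)⟫) • M (f x)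
  ⟪k, e⟫⁻¹ • e

namespace IsSumDiffPair

variable {S : Set E3} {M Q : E3 → E3} {k : E3} {f : E2 → E3} {U : Set E2} {V : Set E3} {x : E2}
  {a : E2}

theorem exists_coversAt (h : IsSumDiffPair S M Q) {O : Set E3} (hO : IsOpen O) {q : E3}
    (hq : q ∈ S) (hqO : q ∈ O) :
    ∃ f U V, ∃ x ∈ U, IsChart S f U V ∧ f x ∈ O ∧ CoversAt S f x := by
  obtain ⟨f, U, V, x₀, hx₀, hc, rfl⟩ := h.isSurface.exists_isChart hq
  obtain ⟨K, hKU, hK, x, hx, ⟨⟨-, hxV⟩, hxO⟩, hev⟩ :=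
    hc.exists_compact_eventually_mem_image h.isCompact.isClosed (N := S ∩ V ∩ O)
      inter_subset_left ⟨f x₀, ⟨hq, hc.mem_target hx₀⟩, hqO⟩
  refine ⟨f, U, V, x, hx, hc, hxO, hc.coversAt_of_isCompact hK hKU hx ?_⟩
  filter_upwards [nhdsWithin_le_nhds hev, nhdsWithin_le_nhds (hO.mem_nhds hxO),
    nhdsWithin_le_nhds (hc.isOpen_target.mem_nhds hxV), self_mem_nhdsWithin] with q hqK hqO hqV hqS
  exact hqK ⟨⟨hqS, hqV⟩, hqO⟩

theorem frequently_ne_zero (h : IsSumDiffPair S M Q) (hc : IsChart S f U V) (hx : x ∈ U)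
    (hcov : CoversAt S f x) : ∃ᶠ y in 𝓝 x, M (f y) ≠ 0 ∧ Q (f y) ≠ 0 := by
  have hfreq : ∃ᶠ q in 𝓝[S] (f x), M q ≠ 0 ∧ Q q ≠ 0 :=
    frequently_nhdsWithin_iff.2
      ((mem_closure_iff_frequently.1 (h.subset_closure (hc.mem hx))).mono fun q hq => ⟨hq.2, hq.1⟩)
  exact frequently_map.1 (hfreq.filter_mono hcov)

section KernelDirection

theorem exists_fderiv_chart_eq (h : IsSumDiffPair S M Q) (hc : IsChart S f U V) (hx : x ∈ U)
    (hW : acceleration M (f x) ≠ 0) (hTk : fderiv ℝ M (f x) k = 0) : ∃ a, fderiv ℝ f x a = k := by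
  have hker := h.not_injective_fderiv_comp_chart hc hx hW
  simp only [injective_iff_map_eq_zero, not_forall] at hker
  obtain ⟨ζ, hζ, hζ0⟩ := hker
  rw [h.fderiv_comp_chart_apply hc hx] at hζ
  obtain ⟨c, rfl⟩ := h.exists_eq_smul_of_fderiv_eq_zero (hc.mem hx) hW
    (fun h0 => hζ0 ((injective_iff_map_eq_zero _).1 (hc.injective_fderiv x hx) _ h0)) hζ hTk
  exact ⟨c • ζ, map_smul _ _ _⟩

theorem exists_eq_smul_add_smul_of_ne_zero (h : IsSumDiffPair S M Q) (hc : IsChart S f U V)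
    (hx : x ∈ U) (hM : M (f x) ≠ 0) (hQ : Q (f x) ≠ 0) (θ : E2) :
    ∃ s t : ℝ, fderiv ℝ f x θ = s • M (f x) + t • Q (f x) := by
  obtain ⟨ξ, hξ⟩ := h.left.mem_range f U V hc x hx
  obtain ⟨η, hη⟩ := h.right.mem_range f U V hc x hx
  have hli : LinearIndependent ℝ ![ξ, η] := by
    refine LinearIndependent.of_comp (fderiv ℝ f x).toLinearMap ?_
    have hcomp : (fderiv ℝ f x).toLinearMap ∘ ![ξ, η] = ![M (f x), Q (f x)] := by
      ext i : 1
      fin_cases i <;> assumption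
    exact hcomp ▸ linearIndependent_pair_of_inner_eq_zero hM hQ (h.inner_eq_zero _ (hc.mem hx))
  obtain ⟨s, t, rfl⟩ := exists_eq_smul_add_smul (by simp) hli θ
  exact ⟨s, t, by rw [map_add, map_smul, map_smul, hξ, hη]⟩

theorem transverseField_self (ha : fderiv ℝ f x a = k) (hk : ‖k‖ = 1) (hkM : ⟪k, M (f x)⟫ = 0) :
    transverseField M f a k x = k := by
  simp [transverseField, ha, hkM, hk]

theorem contDiffAt_transverseField (h : IsSumDiffPair S M Q) (hc : IsChart S f U V) (hx : x ∈ U)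
    (ha : fderiv ℝ f x a = k) (hk : ‖k‖ = 1) (hkM : ⟪k, M (f x)⟫ = 0) (hM : M (f x) ≠ 0) :
    ContDiffAt ℝ 1 (transverseField M f a k) x := by
  have hfa : ContDiffAt ℝ 1 (fun y => fderiv ℝ f y a) x :=
    ((hc.contDiffAt hx).fderiv_right (m := 1) (by norm_num)).clm_apply contDiffAt_const
  have hMf : ContDiffAt ℝ 1 (fun y => M (f y)) x := h.contDiffAt_comp_chart hc hx
  have he := hfa.sub
    (((hfa.inner ℝ hMf).div (hMf.inner ℝ hMf) (by simpa using hM)).smul hMf)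
  exact ((contDiffAt_const.inner ℝ he).inv (by simp [ha, hkM, hk])).smul he

theorem inner_smul_transverseField (h : IsSumDiffPair S M Q) (hc : IsChart S f U V) (hx : x ∈ U)
    (hM : M (f x) ≠ 0) (hQ : Q (f x) ≠ 0) (hk : ⟪k, transverseField M f a k x⟫ ≠ 0) :
    ⟪k, Q (f x)⟫ ≠ 0 ∧ ⟪k, Q (f x)⟫ • transverseField M f a k x = Q (f x) := by
  obtain ⟨s, t, hst⟩ := h.exists_eq_smul_add_smul_of_ne_zero hc hx hM hQ a
  have he : transverseField M f a k x = (t * ⟪k, Q (f x)⟫)⁻¹ • t • Q (f x) := by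
    have hQM : ⟪Q (f x), M (f x)⟫ = 0 := by
      rw [real_inner_comm, h.inner_eq_zero _ (hc.mem hx)]
    have hMM : ⟪M (f x), M (f x)⟫ ≠ 0 := inner_self_ne_zero.2 hM
    simp only [transverseField, hst, inner_add_left, real_inner_smul_left, hQM, mul_zero, add_zero,
      mul_div_cancel_right₀ s hMM, add_sub_cancel_left, inner_smul_right]
  rw [he, inner_smul_right, inner_smul_right] at hk
  have htQ := right_ne_zero_of_mul hk
  have ht := left_ne_zero_of_mul htQ
  have hkQ := right_ne_zero_of_mul htQ
  refine ⟨hkQ, ?_⟩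
  rw [he, smul_smul, smul_smul, show ⟪k, Q (f x)⟫ * (t * ⟪k, Q (f x)⟫)⁻¹ * t = 1 by field_simp,
    one_smul]

theorem fderiv_transverseField_eq_zero (h : IsSumDiffPair S M Q) (hc : IsChart S f U V)
    (hx : x ∈ U) (hM : M (f x) ≠ 0) (hQ : Q (f x) ≠ 0)
    (hd : DifferentiableAt ℝ (transverseField M f a k) x)
    (hk : ∀ᶠ y in 𝓝 x, ⟪k, transverseField M f a k y⟫ ≠ 0) {c : ℝ}
    (hWQ : acceleration Q (f x) = c • Q (f x)) : fderiv ℝ (transverseField M f a k) x = 0 := by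
  have hQf := h.symm.contDiffAt_comp_chart hc hx
  have hMf := h.contDiffAt_comp_chart hc hx
  have hdir : ∀ᶠ y in 𝓝 x, ⟪k, Q (f y)⟫ • transverseField M f a k y = Q (f y) := by
    filter_upwards [hc.isOpen_source.mem_nhds hx, hk, hMf.continuousAt.eventually_ne hM,
      hQf.continuousAt.eventually_ne hQ] with y hyU hyk hyM hyQ
    exact (h.inner_smul_transverseField hc hyU hyM hyQ hyk).2
  ext1 θ
  obtain ⟨s, t, hst⟩ := h.exists_eq_smul_add_smul_of_ne_zero hc hx hM hQ θ
  refine fderiv_apply_eq_zero_of_eventually_smul_eq (v := Q ∘ f) (φ := innerSL ℝ k) (c := t * c)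
    (hQf.differentiableAt one_ne_zero) hd hdir
    (h.inner_smul_transverseField hc hx hM hQ hk.self_of_nhds).1 ?_
  rw [h.symm.fderiv_comp_chart_apply hc hx, hst, map_add, map_smul, map_smul,
    h.fderiv_right_apply _ (hc.mem hx), smul_zero, zero_add, ← acceleration, hWQ, smul_smul,
    Function.comp_apply]

theorem eventually_transverseField_eq (h : IsSumDiffPair S M Q) (hc : IsChart S f U V)
    (hx : x ∈ U) (hcov : CoversAt S f x) (hM : M (f x) ≠ 0) (hk : ‖k‖ = 1)
    (hkM : ⟪k, M (f x)⟫ = 0) (ha : fderiv ℝ f x a = k)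
    (hQ : ∀ᶠ q in 𝓝[S] (f x), ∃ c : ℝ, acceleration Q q = c • Q q) :
    ∀ᶠ y in 𝓝 x, transverseField M f a k y = k := by
  have he := h.contDiffAt_transverseField hc hx ha hk hkM hM
  have hek := transverseField_self ha hk hkM
  have hkne : ∀ᶠ y in 𝓝 x, ⟪k, transverseField M f a k y⟫ ≠ 0 :=
    (continuousAt_const.inner he.continuousAt).eventually_ne (by simp [hek, hk])
  have hfS : Tendsto f (𝓝 x) (𝓝[S] (f x)) :=
    tendsto_nhdsWithin_iff.2 ⟨hc.continuousAt hx, hc.eventually_mem hx⟩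
  obtain ⟨r, hr, hball⟩ := Metric.eventually_nhds_iff_ball.1 <|
    ((hc.isOpen_source.eventually_mem hx).and (hcov.eventually hc hx)).and
      ((he.eventually (by simp)).and (hkne.eventually_nhds.and (hfS.eventually hQ)))
  have hderiv : EqOn (fderiv ℝ (transverseField M f a k)) 0 (Metric.ball x r) := by
    intro y hy
    obtain ⟨⟨hyU, hycov⟩, hye, -⟩ := hball y hy
    refine isClosed_singleton.mem_of_frequently_of_tendsto
      (((h.frequently_ne_zero hc hyU hycov).and_eventually
        (Metric.isOpen_ball.mem_nhds hy)).mono fun z hz => ?_)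
      (hye.fderiv_right (m := 0) (by simp)).continuousAt
    obtain ⟨⟨hzU, -⟩, hze, hzk, c, hzc⟩ := hball z hz.2
    exact h.fderiv_transverseField_eq_zero hc hzU hz.1.1 hz.1.2
      (hze.differentiableAt one_ne_zero) hzk hzc
  filter_upwards [Metric.ball_mem_nhds x hr] with y hy
  refine Eq.trans ?_ hek
  exact Metric.isOpen_ball.is_const_of_fderiv_eq_zero (convex_ball x r).isPreconnected
    (fun z hz => ((hball z hz).2.1.differentiableAt one_ne_zero).differentiableWithinAt) hderiv hy
    (Metric.mem_ball_self hr)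

theorem eventually_fderiv_eq_zero (h : IsSumDiffPair S M Q) (hc : IsChart S f U V) (hx : x ∈ U)
    (hcov : CoversAt S f x) (hW : acceleration M (f x) ≠ 0) (hk : ‖k‖ = 1)
    (hTk : fderiv ℝ M (f x) k = 0)
    (hQ : ∀ᶠ q in 𝓝[S] (f x), ∃ c : ℝ, acceleration Q q = c • Q q) :
    ∀ᶠ q in 𝓝[S] (f x), fderiv ℝ M q k = 0 := by
  obtain ⟨a, ha⟩ := h.exists_fderiv_chart_eq hc hx hW hTk
  have hek := h.eventually_transverseField_eq hc hx hcov (ne_zero_of_acceleration_ne_zero hW) hk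
    (h.inner_eq_zero_of_fderiv_eq_zero (hc.mem hx) hW hTk) ha hQ
  have hDMk : ∀ᶠ y in 𝓝 x, fderiv ℝ M (f y) k = 0 := by
    filter_upwards [hek.eventually_nhds, hcov.eventually hc hx, hc.isOpen_source.mem_nhds hx]
      with y hyk hycov hyU
    refine isClosed_singleton.mem_of_frequently_of_tendsto
      (((h.frequently_ne_zero hc hyU hycov).and_eventually
        (hyk.and (hc.isOpen_source.mem_nhds hyU))).mono ?_)
      ((h.continuous_fderiv_left.continuousAt.comp (hc.continuousAt hyU)).clm_apply
        continuousAt_const)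
    rintro z ⟨⟨hzM, hzQ⟩, hzk, hzU⟩
    obtain ⟨hkQ, hQz⟩ := h.inner_smul_transverseField (a := a) (k := k) hc hzU hzM hzQ
      (by simp [hzk, hk])
    have hDMQ := h.fderiv_left_apply _ (hc.mem hzU)
    rw [← hQz, hzk, map_smul] at hDMQ
    exact (smul_eq_zero.1 hDMQ).resolve_left hkQ
  filter_upwards [hcov.eventually_exists hDMk]
  rintro _ ⟨y, hy, rfl⟩
  exact hy

end KernelDirection

end IsSumDiffPair

/-- Near `q`, the value of `M` on `S` is determined by its component along `w`. -/
def IsDeterminedAt (S : Set E3) (M : E3 → E3) (w q : E3) : Prop :=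
  ∀ᶠ p : E3 × E3 in 𝓝 (q, q), p.1 ∈ S → p.2 ∈ S → ⟪w, M p.1⟫ = ⟪w, M p.2⟫ → M p.1 = M p.2

theorem IsDeterminedAt.eventually {S : Set E3} {M : E3 → E3} {w q : E3}
    (h : IsDeterminedAt S M w q) : ∀ᶠ q' in 𝓝 q, IsDeterminedAt S M w q' :=
  (continuous_id.prodMk continuous_id).continuousAt.eventually (Filter.Eventually.eventually_nhds h)

namespace IsSumDiffPair

variable {S : Set E3} {M Q : E3 → E3} {k q : E3} {f : E2 → E3} {U : Set E2} {V : Set E3} {x : E2}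

section Translation

theorem symm_add_smul_eq (h : IsSumDiffPair S M Q)
    {e : OpenPartialHomeomorph E3 E3} (he : IsDiffeoBox (straighten M k) e) (hk : ‖k‖ = 1)
    (hcurve : ∀ p ∈ e.source, p ∈ S → HasLevelCurve S M p)
    (hker : ∀ p ∈ e.source, p ∈ S → fderiv ℝ M p k = 0) (hq : q ∈ e.source) (hqS : q ∈ S) {t : ℝ}
    (ht : straighten M k q + t • k ∈ e.target) : e.symm (straighten M k q + t • k) = q + t • k := by
  let J := {s : ℝ | straighten M k q + s • k ∈ e.target}
  have hJ : IsOpen J := e.open_target.preimage (by fun_prop)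
  let γ : ℝ → E3 := fun s => e.symm (straighten M k q + s • k)
  have hline (s : ℝ) : HasDerivAt (fun s : ℝ => straighten M k q + s • k) k s := by
    simpa using ((hasDerivAt_id s).smul_const k).const_add (straighten M k q)
  have hγ {s : ℝ} (hs : s ∈ J) : HasDerivAt γ k s := by
    have hd : HasDerivAt γ (fderiv ℝ e.symm (straighten M k q + s • k) k) s :=
      ((he.contDiffAt_symm _ hs).differentiableAt one_ne_zero).hasFDerivAt.comp_hasDerivAt s
        (hline s)
    have hst := (contDiff_straighten h.left.contDiff k).differentiable one_ne_zero (γ s)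
    have hinv := (hst.hasFDerivAt.comp_hasDerivAt s hd).unique
      ((hline s).congr_of_eventuallyEq ((hJ.eventually_mem hs).mono fun u hu => he.apply_symm hu))
    have hk' : fderiv ℝ (straighten M k) (γ s) k = k := by
      rw [fderiv_straighten_apply (h.differentiable_left _),
        hker _ (e.map_target hs) (h.symm_mem he hcurve hq hqS hs).1]
      simp [hk]
    rwa [he.injective_fderiv _ (e.map_target hs) (hinv.trans hk'.symm)] at hd
  have hderiv {s : ℝ} (hs : s ∈ J) : HasDerivAt (fun s => γ s - s • k) 0 s := by
    simpa using (hγ hs).fun_sub ((hasDerivAt_id s).smul_const k)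
  have hconst := hJ.is_const_of_deriv_eq_zero
    (he.convex_setOf_add_smul_mem (straighten M k q) k).isPreconnected
    (fun s hs => (hderiv hs).differentiableAt.differentiableWithinAt)
    (fun s hs => (hderiv hs).deriv) ht (y := 0) (by simpa [J] using he.apply_mem_target hq)
  simpa [γ, he.symm_apply hq, sub_eq_iff_eq_add] using hconst

theorem eventually_hasLevelCurve (h : IsSumDiffPair S M Q) (hW : acceleration M q ≠ 0) :
    ∀ᶠ p in 𝓝 q, p ∈ S → HasLevelCurve S M p :=
  ((continuous_acceleration h.left.contDiff).continuousAt.eventually_ne hW).mono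
    fun _ hp hpS => h.hasLevelCurve hpS hp

theorem eventually_add_smul_mem (h : IsSumDiffPair S M Q) (hq : q ∈ S) (hW : acceleration M q ≠ 0)
    (hk : ‖k‖ = 1) (hker : ∀ᶠ p in 𝓝[S] q, fderiv ℝ M p k = 0) :
    ∀ᶠ p : E3 × ℝ in 𝓝 (q, 0), p.1 ∈ S → p.1 + p.2 • k ∈ S ∧ M (p.1 + p.2 • k) = M p.1 := by
  rw [eventually_nhdsWithin_iff] at hker
  obtain ⟨e, he, hqe, hN⟩ := h.exists_isDiffeoBox_straighten hq hW
    (norm_ne_zero_iff.1 (hk ▸ one_ne_zero)) (hker.self_of_nhds hq)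
    (hker.and (h.eventually_hasLevelCurve hW))
  have hline : ContinuousAt (fun p : E3 × ℝ => straighten M k p.1 + p.2 • k) (q, 0) :=
    (((contDiff_straighten h.left.contDiff k).continuous.comp continuous_fst).add
      (continuous_snd.smul continuous_const)).continuousAt
  have htarget : e.target ∈ 𝓝 (straighten M k q + (0 : ℝ) • k) :=
    e.open_target.mem_nhds (by simpa using he.apply_mem_target hqe)
  filter_upwards [hline.eventually htarget,
    continuousAt_fst.eventually (e.open_source.mem_nhds hqe)] with p ht hp hpS
  have hcurve : ∀ p ∈ e.source, p ∈ S → HasLevelCurve S M p := fun p hp => (hN hp).2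
  have hker : ∀ p ∈ e.source, p ∈ S → fderiv ℝ M p k = 0 := fun p hp => (hN hp).1
  have heq := h.symm_add_smul_eq he hk hcurve hker hp hpS ht
  exact heq ▸ h.symm_mem he hcurve hp hpS ht

end Translation

section Determined

theorem injective_fderiv_sheetCoordinates (h : IsSumDiffPair S M Q) (hc : IsChart S f U V)
    (hx : x ∈ U) (hW : acceleration M (f x) ≠ 0) (hk : k ≠ 0) (hTk : fderiv ℝ M (f x) k = 0) :
    Function.Injective
      (fderiv ℝ (fun y => (⟪acceleration M (f x), (M ∘ f) y⟫, ⟪k, f y⟫)) x) := by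
  have hMf := ((h.contDiffAt_comp_chart hc hx).differentiableAt one_ne_zero).hasFDerivAt
  have hker := h.not_injective_fderiv_comp_chart hc hx hW
  simp only [injective_iff_map_eq_zero, not_forall] at hker
  obtain ⟨ζ, hζ, hζ0⟩ := hker
  obtain ⟨ξ, hξ⟩ := h.left.mem_range f U V hc x hx
  have hLξ : fderiv ℝ (M ∘ f) x ξ = acceleration M (f x) := by
    rw [h.fderiv_comp_chart_apply hc hx, hξ, acceleration]
  have hderiv := (((innerSL ℝ (acceleration M (f x))).hasFDerivAt.comp x hMf).prodMk
    ((innerSL ℝ k).hasFDerivAt.comp x (hc.hasFDerivAt hx))).fderiv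
  rw [injective_iff_map_eq_zero]
  intro v hv
  have hv' : (⟪acceleration M (f x), fderiv ℝ (M ∘ f) x v⟫, ⟪k, fderiv ℝ f x v⟫) = (0 : ℝ × ℝ) :=
    (DFunLike.congr_fun hderiv v).symm.trans hv
  obtain ⟨c, hcv⟩ := exists_map_eq_smul (L := (fderiv ℝ (M ∘ f) x).toLinearMap) (by simp) hζ0 hζ
    (ξ := ξ) (by simpa [hLξ] using hW) v
  simp only [ContinuousLinearMap.coe_coe, hLξ] at hcv
  have hc0 : c = 0 := by
    simpa [hcv, inner_smul_right, hW] using congrArg Prod.fst hv'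
  rw [hc0, zero_smul, h.fderiv_comp_chart_apply hc hx] at hcv
  obtain ⟨d, hd⟩ := h.exists_eq_smul_of_fderiv_eq_zero (hc.mem hx) hW hk hTk hcv
  have hd0 : d = 0 := by
    simpa [hd, inner_smul_right, hk] using congrArg Prod.snd hv'
  exact (injective_iff_map_eq_zero _).1 (hc.injective_fderiv x hx) v (by rw [hd, hd0, zero_smul])

theorem exists_sheetCoordinates (h : IsSumDiffPair S M Q) (hc : IsChart S f U V) (hx : x ∈ U)
    (hW : acceleration M (f x) ≠ 0) (hk : k ≠ 0) (hTk : fderiv ℝ M (f x) k = 0) :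
    ∃ e : OpenPartialHomeomorph E2 (ℝ × ℝ),
      x ∈ e.source ∧ ∀ y, e y = (⟪acceleration M (f x), M (f y)⟫, ⟪k, f y⟫) := by
  obtain ⟨e, he, hxe, -⟩ := exists_isDiffeoBox
    (f := fun y => (⟪acceleration M (f x), (M ∘ f) y⟫, ⟪k, f y⟫))
    ((contDiffAt_const.inner ℝ (h.contDiffAt_comp_chart hc hx)).prodMk
      (contDiffAt_const.inner ℝ ((hc.contDiffAt hx).of_le one_le_two)))
    (by simp) (h.injective_fderiv_sheetCoordinates hc hx hW hk hTk) univ_mem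
  exact ⟨e, hxe, fun y => congrFun he.coe_eq y⟩

theorem isDeterminedAt_of_coversAt (h : IsSumDiffPair S M Q) (hc : IsChart S f U V) (hx : x ∈ U)
    (hcov : CoversAt S f x) (hW : acceleration M (f x) ≠ 0) (hk : ‖k‖ = 1)
    (hker : ∀ᶠ q in 𝓝[S] (f x), fderiv ℝ M q k = 0) :
    IsDeterminedAt S M (acceleration M (f x)) (f x) := by
  obtain ⟨e, hxe, he⟩ := h.exists_sheetCoordinates hc hx hW
    (norm_ne_zero_iff.1 (hk ▸ one_ne_zero)) (hker.self_of_nhdsWithin (hc.mem hx))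
  have hsheet := eventually_nhdsWithin_iff.1
    (hcov.eventually_exists (e.open_source.eventually_mem hxe))
  have htranslate := h.eventually_add_smul_mem (hc.mem hx) hW hk hker
  let shift : E3 × E3 → E3 × ℝ := fun p => (p.1, ⟪k, p.2 - p.1⟫)
  have hshift : Tendsto shift (𝓝 (f x, f x)) (𝓝 (f x, 0)) := by
    have : Continuous shift := by fun_prop
    simpa [shift] using this.tendsto (f x, f x)
  have hmove : Tendsto (fun p : E3 × ℝ => p.1 + p.2 • k) (𝓝 (f x, 0)) (𝓝 (f x)) := by
    have : Continuous (fun p : E3 × ℝ => p.1 + p.2 • k) := by fun_prop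
    simpa using this.tendsto (f x, 0)
  filter_upwards [hshift.eventually (htranslate.and (hmove.eventually hsheet)),
    continuousAt_snd.eventually hsheet]
  rintro ⟨p, p'⟩ ⟨htr, hsh⟩ hp' hpS hpS' heq
  obtain ⟨htS, htM⟩ := htr hpS
  obtain ⟨y, hy, hyp⟩ := hsh htS
  obtain ⟨y', hy', rfl⟩ := hp' hpS'
  have hyy' : y = y' := e.injOn hy hy' <| by
    rw [he, he, hyp, htM, heq]
    simp [shift, inner_add_right, inner_sub_right, inner_smul_right, hk]
  rw [← htM, ← hyp, hyy']

theorem coversAt_of_isDeterminedAt (h : IsSumDiffPair S M Q) (hc : IsChart S f U V) (hx : x ∈ U)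
    (hW : acceleration M (f x) ≠ 0) (hdet : IsDeterminedAt S M (acceleration M (f x)) (f x)) :
    CoversAt S f x := by
  obtain ⟨k, hk, hTk, -⟩ := h.exists_fderiv_eq_zero (hc.mem hx)
  have hk0 : k ≠ 0 := norm_ne_zero_iff.1 (hk ▸ one_ne_zero)
  obtain ⟨e, hxe, he⟩ := h.exists_sheetCoordinates hc hx hW hk0 hTk
  obtain ⟨b, hb, hxb, -⟩ := h.exists_isDiffeoBox_straighten (hc.mem hx) hW hk0 hTk univ_mem
  let π : E3 → ℝ × ℝ := fun q => (⟪acceleration M (f x), M q⟫, ⟪k, q⟫)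
  have hπ : Continuous π := (continuous_const.inner h.left.contDiff.continuous).prodMk
    (continuous_const.inner continuous_id)
  have hπx : e x = π (f x) := he x
  have htarget : π (f x) ∈ e.target := hπx ▸ e.map_source hxe
  have hy : Tendsto (fun q => e.symm (π q)) (𝓝 (f x)) (𝓝 x) := by
    have := (e.continuousAt_symm htarget).tendsto.comp hπ.continuousAt
    rwa [← hπx, e.left_inv hxe] at this
  have hfy : Tendsto (fun q => f (e.symm (π q))) (𝓝 (f x)) (𝓝 (f x)) :=
    (hc.continuousAt hx).tendsto.comp hy
  intro C hC
  filter_upwards [nhdsWithin_le_nhds (hy.eventually hC),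
    nhdsWithin_le_nhds (hy.eventually (hc.isOpen_source.mem_nhds hx)),
    nhdsWithin_le_nhds (hfy.eventually (b.open_source.mem_nhds hxb)),
    nhdsWithin_le_nhds (b.open_source.mem_nhds hxb),
    nhdsWithin_le_nhds ((hfy.prodMk_nhds tendsto_id).eventually hdet),
    nhdsWithin_le_nhds (hπ.continuousAt (e.open_target.mem_nhds htarget)), self_mem_nhdsWithin]
    with q hqC hqU hqb hqb' hqdet hqt hqS
  have hπq : π (f (e.symm (π q))) = π q := (he _).symm.trans (e.right_inv hqt)
  have hMq : M (f (e.symm (π q))) = M q :=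
    hqdet (hc.mem hqU) hqS (congrArg Prod.fst hπq)
  have hkq : ⟪k, f (e.symm (π q))⟫ = ⟪k, q⟫ := congrArg Prod.snd hπq
  have hfq : f (e.symm (π q)) = q := by
    rw [← hb.symm_apply hqb, straighten, hMq, hkq]
    exact hb.symm_apply hqb'
  exact hfq ▸ hqC

theorem isDeterminedAt_of_add_smul (h : IsSumDiffPair S M Q) (hq : q ∈ S)
    (hW : acceleration M q ≠ 0) (hk : ‖k‖ = 1) (hTk : fderiv ℝ M q k = 0) :
    ∀ᶠ t in 𝓝 (0 : ℝ), ∀ w, M (q + t • k) = M q → IsDeterminedAt S M w (q + t • k) →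
      IsDeterminedAt S M w q := by
  obtain ⟨e, he, hqe, hcurve⟩ := h.exists_isDiffeoBox_straighten hq hW
    (norm_ne_zero_iff.1 (hk ▸ one_ne_zero)) hTk (h.eventually_hasLevelCurve hW)
  have hline : ContinuousAt (fun t : ℝ => q + t • k) 0 := by fun_prop
  have hsource : e.source ∈ 𝓝 (q + (0 : ℝ) • k) := by simpa using e.open_source.mem_nhds hqe
  filter_upwards [hline.eventually hsource] with t ht w hM hdet
  have hmove : ContinuousAt (fun p => straighten M k p + t • k) q :=
    ((contDiff_straighten h.left.contDiff k).continuous.add continuous_const).continuousAt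
  have hst : straighten M k q + t • k = straighten M k (q + t • k) :=
    (straighten_add_smul hk hM).symm
  have htarget : straighten M k q + t • k ∈ e.target := hst ▸ he.apply_mem_target ht
  have hshift : Tendsto (fun p => e.symm (straighten M k p + t • k)) (𝓝 q) (𝓝 (q + t • k)) := by
    have := (e.continuousAt_symm htarget).tendsto.comp hmove
    rwa [hst, he.symm_apply ht] at this
  have hnear : ∀ᶠ p in 𝓝 q, p ∈ S → e.symm (straighten M k p + t • k) ∈ S ∧
      M (e.symm (straighten M k p + t • k)) = M p := by
    filter_upwards [e.open_source.mem_nhds hqe, hmove.eventually (e.open_target.mem_nhds htarget)]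
      with p hp hpt hpS
    exact h.symm_mem he (fun _ hp' => hcurve hp') hp hpS hpt
  have hshift₂ := (hshift.comp (continuous_fst.tendsto (q, q))).prodMk_nhds
    (hshift.comp (continuous_snd.tendsto (q, q)))
  filter_upwards [hshift₂.eventually hdet, continuousAt_fst.eventually hnear,
    continuousAt_snd.eventually hnear] with p hp hp1 hp2 hS1 hS2 heq
  rw [← (hp1 hS1).2, ← (hp2 hS2).2] at heq ⊢
  exact hp (hp1 hS1).1 (hp2 hS2).1 heq

end Determined

end IsSumDiffPair

/-- `q ∈ S` is a point where `M` and its acceleration take the values `m` and `w`, where `k` spans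
the kernel of `DM`, and where `S` is locally a single sheet; such points propagate along `k`. -/
structure IsTranslationPoint (S : Set E3) (M : E3 → E3) (k m w q : E3) : Prop where
  mem : q ∈ S
  apply_eq : M q = m
  acceleration_eq : acceleration M q = w
  fderiv_eq_zero : fderiv ℝ M q k = 0
  isDeterminedAt : IsDeterminedAt S M w q

namespace IsSumDiffPair

variable {S : Set E3} {M Q : E3 → E3} {k m w q : E3}

theorem acceleration_eq_of_eventually_add_smul (h : IsSumDiffPair S M Q) (hq : q ∈ S) {t : ℝ}
    (ht : ∀ᶠ p in 𝓝 q, p ∈ S → M (p + t • k) = M p) :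
    acceleration M (q + t • k) = acceleration M q := by
  obtain ⟨f, U, V, x, hx, hc, rfl⟩ := h.isSurface.exists_isChart hq
  obtain ⟨ξ, hξ⟩ := h.left.mem_range f U V hc x hx
  have hf : HasFDerivAt (fun y => f y + t • k) (fderiv ℝ f x) x :=
    (hc.hasFDerivAt hx).add_const _
  have hshift : fderiv ℝ M (f x + t • k) ∘L fderiv ℝ f x = fderiv ℝ M (f x) ∘L fderiv ℝ f x := by
    refine ((h.differentiable_left _).hasFDerivAt.comp x hf).unique
      (((h.differentiable_left _).hasFDerivAt.comp x (hc.hasFDerivAt hx)).congr_of_eventuallyEq ?_)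
    filter_upwards [(hc.continuousAt hx).eventually ht, hc.eventually_mem hx] with y hy hyS
    exact hy hyS
  have hξ' := DFunLike.congr_fun hshift ξ
  simp only [ContinuousLinearMap.comp_apply, hξ] at hξ'
  rw [acceleration, ht.self_of_nhds hq, hξ', acceleration]

theorem eventually_isTranslationPoint (h : IsSumDiffPair S M Q) (hw : w ≠ 0) (hk : ‖k‖ = 1)
    (hq : IsTranslationPoint S M k m w q)
    (hQ : ∀ᶠ p in 𝓝[S] q, ∃ c : ℝ, acceleration Q p = c • Q p) :
    ∀ᶠ t in 𝓝 (0 : ℝ), IsTranslationPoint S M k m w (q + t • k) := by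
  obtain ⟨f, U, V, x, hx, hc, rfl⟩ := h.isSurface.exists_isChart hq.mem
  have hW : acceleration M (f x) ≠ 0 := hq.acceleration_eq ▸ hw
  have hker := h.eventually_fderiv_eq_zero hc hx
    (h.coversAt_of_isDeterminedAt hc hx hW (hq.acceleration_eq ▸ hq.isDeterminedAt))
    hW hk hq.fderiv_eq_zero hQ
  have hmove : Tendsto (fun t : ℝ => f x + t • k) (𝓝 0) (𝓝 (f x)) := by
    have : Continuous fun t : ℝ => f x + t • k := by fun_prop
    simpa using this.tendsto 0
  have htranslate := (Continuous.prodMk_right (f x)).continuousAt.eventually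
    (h.eventually_add_smul_mem hq.mem hW hk hker).eventually_nhds
  filter_upwards [htranslate, hmove.eventually (eventually_nhdsWithin_iff.1 hker),
    hmove.eventually hq.isDeterminedAt.eventually] with t ht hkt hdet
  have ht' := (Continuous.prodMk_left t).continuousAt.eventually ht
  obtain ⟨hmem, hM⟩ := ht'.self_of_nhds hq.mem
  exact ⟨hmem, hM.trans hq.apply_eq,
    (h.acceleration_eq_of_eventually_add_smul hq.mem (ht'.mono fun _ hp hpS => (hp hpS).2)).trans
      hq.acceleration_eq, hkt hmem, hdet⟩

theorem isTranslationPoint_of_frequently (h : IsSumDiffPair S M Q) (hw : w ≠ 0) (hk : ‖k‖ = 1)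
    (hq : ∃ᶠ t in 𝓝 (0 : ℝ), IsTranslationPoint S M k m w (q + t • k)) :
    IsTranslationPoint S M k m w q := by
  have hmove : Tendsto (fun t : ℝ => q + t • k) (𝓝 0) (𝓝 q) := by
    have : Continuous fun t : ℝ => q + t • k := by fun_prop
    simpa using this.tendsto 0
  have hclosed : IsClosed {p | p ∈ S ∧ M p = m ∧ acceleration M p = w ∧ fderiv ℝ M p k = 0} :=
    h.isCompact.isClosed.inter <| (isClosed_eq h.left.contDiff.continuous continuous_const).inter <|
      (isClosed_eq (continuous_acceleration h.left.contDiff) continuous_const).inter <|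
      isClosed_eq (h.continuous_fderiv_left.clm_apply continuous_const) continuous_const
  obtain ⟨hqS, hM, hW, hTk⟩ := hclosed.mem_of_frequently_of_tendsto
    (hq.mono fun _ ht => ⟨ht.mem, ht.apply_eq, ht.acceleration_eq, ht.fderiv_eq_zero⟩) hmove
  obtain ⟨t, ht, hdet⟩ :=
    (hq.and_eventually (h.isDeterminedAt_of_add_smul hqS (hW ▸ hw) hk hTk)).exists
  exact ⟨hqS, hM, hW, hTk, hdet w (ht.apply_eq.trans hM.symm) ht.isDeterminedAt⟩

theorem isTranslationPoint_add_smul (h : IsSumDiffPair S M Q) (hw : w ≠ 0) (hk : ‖k‖ = 1)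
    (hQ : ∀ p, IsTranslationPoint S M k m w p →
      ∀ᶠ p' in 𝓝[S] p, ∃ c : ℝ, acceleration Q p' = c • Q p')
    (hq : IsTranslationPoint S M k m w q) (t : ℝ) :
    IsTranslationPoint S M k m w (q + t • k) := by
  have hshift (s t : ℝ) : q + s • k + (t - s) • k = q + t • k := by module
  have hsub (s : ℝ) : Tendsto (fun t => t - s) (𝓝 s) (𝓝 0) := by
    simpa using (continuous_sub_right s).tendsto s
  have hclopen : IsClopen {t : ℝ | IsTranslationPoint S M k m w (q + t • k)} := by
    refine ⟨isClosed_iff_frequently.2 fun s hs => ?_, isOpen_iff_mem_nhds.2 fun s hs => ?_⟩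
    · refine h.isTranslationPoint_of_frequently hw hk ((hsub s).frequently (hs.mono fun t ht => ?_))
      rwa [hshift]
    · filter_upwards [(hsub s).eventually (h.eventually_isTranslationPoint hw hk hs (hQ _ hs))]
        with t ht
      rwa [hshift] at ht
  exact eq_univ_iff_forall.1 (hclopen.eq_univ ⟨0, by simpa using hq⟩) t

theorem acceleration_eq_zero (h : IsSumDiffPair S M Q) {O : Set (E3 × E3)} (hO : IsOpen O)
    (hQ : ∀ p ∈ S, (M p, acceleration M p) ∈ O → ∃ c : ℝ, acceleration Q p = c • Q p)
    (hq : q ∈ S) (hqO : (M q, acceleration M q) ∈ O) : acceleration M q = 0 := by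
  by_contra hW
  have hcont : Continuous fun p => (M p, acceleration M p) :=
    h.left.contDiff.continuous.prodMk (continuous_acceleration h.left.contDiff)
  have hcol {p : E3} (hp : (M p, acceleration M p) ∈ O) :
      ∀ᶠ p' in 𝓝[S] p, ∃ c : ℝ, acceleration Q p' = c • Q p' := by
    filter_upwards [nhdsWithin_le_nhds (hcont.continuousAt (hO.mem_nhds hp)), self_mem_nhdsWithin]
      with p' hp' hpS' using hQ p' hpS' hp'
  obtain ⟨f, U, V, x, hx, hc, ⟨hW, hxO⟩, hcov⟩ := h.exists_coversAt
    ((isOpen_ne.preimage (continuous_acceleration h.left.contDiff)).inter (hO.preimage hcont))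
    hq ⟨hW, hqO⟩
  obtain ⟨k, hk, hTk, -⟩ := h.exists_fderiv_eq_zero (hc.mem hx)
  have hline := h.isTranslationPoint_add_smul hW hk
    (fun p hp => hcol (by rw [hp.apply_eq, hp.acceleration_eq]; exact hxO))
    ⟨hc.mem hx, rfl, rfl, hTk, h.isDeterminedAt_of_coversAt hc hx hcov hW hk
      (h.eventually_fderiv_eq_zero hc hx hcov hW hk hTk (hcol hxO))⟩
  have hk0 : k = 0 := eq_zero_of_hasDerivAt_const_of_isBounded (γ := fun t : ℝ => f x + t • k)
    (fun t => by simpa using ((hasDerivAt_id t).smul_const k).const_add (f x))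
    (h.isCompact.isBounded.subset (range_subset_iff.2 fun t => (hline t).mem))
  simp [hk0] at hk

end IsSumDiffPair

section TangentPotentialField

theorem exists_contDiff_hasCompactSupport_eventuallyEq {E F : Type*} [NormedAddCommGroup E]
    [NormedSpace ℝ E] [FiniteDimensional ℝ E] [NormedAddCommGroup F] [NormedSpace ℝ F] {n : ℕ∞}
    {K W : Set E} (hK : IsCompact K) (hW : IsOpen W) (hKW : K ⊆ W) {v : E → F}
    (hv : ContDiffOn ℝ n v W) :
    ∃ v' : E → F, ContDiff ℝ n v' ∧ HasCompactSupport v' ∧ ∀ p ∈ K, v' =ᶠ[𝓝 p] v := by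
  obtain ⟨L, hL, hKL, hLW⟩ := exists_compact_between hK hW hKW
  obtain ⟨φ, hφone, hφzero, -⟩ := exists_contMDiffMap_one_nhds_of_subset_interior
    (modelWithCornersSelf ℝ E) (n := n) hK.isClosed hKL
  refine ⟨fun x => φ x • v x, contDiff_iff_contDiffAt.2 fun x => ?_,
    HasCompactSupport.intro hL fun x hx => by rw [hφzero x hx, zero_smul], fun p hp => ?_⟩
  · by_cases hx : x ∈ W
    · exact φ.contMDiff.contDiff.contDiffAt.smul (hv.contDiffAt (hW.mem_nhds hx))
    · have hzero : (fun x => φ x • v x) =ᶠ[𝓝 x] fun _ => 0 := by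
        filter_upwards [hL.isClosed.isOpen_compl.mem_nhds fun h => hx (hLW h)] with y hy
        rw [hφzero y hy, zero_smul]
      exact contDiffAt_const.congr_of_eventuallyEq hzero
  · filter_upwards [eventually_nhdsSet_iff_forall.1 hφone p hp] with y hy
    rw [hy, one_smul]

theorem isSymmetric_fderiv_of_curl3_eq_zero {v : E3 → E3} {p : E3} (h : curl3 v p = 0) :
    (fderiv ℝ v p : E3 →ₗ[ℝ] E3).IsSymmetric := by
  have h0 : pder v 2 1 p = pder v 1 2 p := by
    simpa [curl3, mk3, sub_eq_zero] using congrArg (fun z : E3 => z 0) h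
  have h1 : pder v 0 2 p = pder v 2 0 p := by
    simpa [curl3, mk3, sub_eq_zero] using congrArg (fun z : E3 => z 1) h
  have h2 : pder v 1 0 p = pder v 0 1 p := by
    simpa [curl3, mk3, sub_eq_zero] using congrArg (fun z : E3 => z 2) h
  rw [← LinearMap.isHermitian_toMatrix_iff (EuclideanSpace.basisFun (Fin 3) ℝ)]
  ext i j
  fin_cases i <;> fin_cases j <;> simp_all [LinearMap.toMatrix_apply, pder, e3]

theorem trace_fderiv_eq_div3 (v : E3 → E3) (p : E3) :
    LinearMap.trace ℝ E3 (fderiv ℝ v p : E3 →ₗ[ℝ] E3) = div3 v p := by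
  rw [LinearMap.trace_eq_sum_inner _ (EuclideanSpace.basisFun (Fin 3) ℝ)]
  simp [div3, pder, e3, EuclideanSpace.inner_single_left]

variable {S Ω W : Set E3} {v : E3 → E3} {p : E3}

theorem isSymmetric_fderiv_of_mem_closure (hp : p ∈ closure Ω) (hv : ContinuousAt (fderiv ℝ v) p)
    (hcurl : ∀ q ∈ Ω, curl3 v q = 0) : (fderiv ℝ v p : E3 →ₗ[ℝ] E3).IsSymmetric := by
  intro u w
  exact tendsto_nhds_unique_of_frequently_eq
    ((hv.clm_apply continuousAt_const).inner (𝕜 := ℝ) continuousAt_const)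
    (continuousAt_const.inner (𝕜 := ℝ) (hv.clm_apply continuousAt_const))
    ((mem_closure_iff_frequently.1 hp).mono fun q hq =>
      isSymmetric_fderiv_of_curl3_eq_zero (hcurl q hq) u w)

theorem trace_fderiv_eq_zero_of_mem_closure (hp : p ∈ closure Ω) (hv : ContinuousAt (fderiv ℝ v) p)
    (hdiv : ∀ q ∈ Ω, div3 v q = 0) :
    LinearMap.trace ℝ E3 (fderiv ℝ v p : E3 →ₗ[ℝ] E3) = 0 := by
  rw [trace_fderiv_eq_div3]
  have hcont : ContinuousAt (div3 v) p := tendsto_finsetSum _ fun i _ =>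
    (EuclideanSpace.proj (𝕜 := ℝ) i).continuous.continuousAt.comp (hv.clm_apply continuousAt_const)
  exact tendsto_nhds_unique_of_frequently_eq hcont tendsto_const_nhds
    ((mem_closure_iff_frequently.1 hp).mono hdiv)

theorem IsChart.mem_range_of_isTangentAt {f : E2 → E3} {U : Set E2} {V : Set E3} {x : E2}
    (hc : IsChart S f U V) (hx : x ∈ U) (hS : IsCompact S) (hint : interior S = ∅)
    (hv : ContDiff ℝ 1 v) (hcs : HasCompactSupport v) (htan : ∀ p ∈ S, IsTangentAt S p (v p)) :
    v (f x) ∈ range (fderiv ℝ f x) := by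
  obtain ⟨K, hK⟩ := hv.lipschitzWith_of_hasCompactSupport hcs one_ne_zero
  obtain ⟨Φ, hΦ⟩ := exists_isFlow hv hcs
  exact hΦ.mem_range_of_interior_eq_empty hK
    (fun p hp t => hΦ.mem_of_isTangentAt hS hK htan hp t) hint (by simp)
    (hc.hasStrictFDerivAt hx) (hc.injective_fderiv x hx) (hc.eventually_mem hx)

theorem exists_isTangentPotentialField (hS : IsCompact S) (hint : interior S = ∅)
    (hW : IsOpen W) (hSW : S ⊆ W) (hv : ContDiffOn ℝ 1 v W) (hcl : S ⊆ closure Ω)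
    (hdiv : ∀ p ∈ Ω, div3 v p = 0) (hcurl : ∀ p ∈ Ω, curl3 v p = 0)
    (htan : ∀ p ∈ S, IsTangentAt S p (v p)) :
    ∃ v', IsTangentPotentialField S v' ∧ ∀ p ∈ S, v' =ᶠ[𝓝 p] v := by
  obtain ⟨v', hv', hcs, heq⟩ := exists_contDiff_hasCompactSupport_eventuallyEq (n := 1) hS hW hSW hv
  have hD (p : E3) (hp : p ∈ S) : ContinuousAt (fderiv ℝ v) p :=
    (hv.continuousOn_fderiv_of_isOpen hW le_rfl).continuousAt (hW.mem_nhds (hSW hp))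
  refine ⟨v', ⟨hv', hcs, fun p hp => ?_, fun p hp => ?_, fun f U V hc x hx => ?_⟩, heq⟩
  · rw [(heq p hp).fderiv_eq]
    exact isSymmetric_fderiv_of_mem_closure (hcl hp) (hD p hp) hcurl
  · rw [(heq p hp).fderiv_eq]
    exact trace_fderiv_eq_zero_of_mem_closure (hcl hp) (hD p hp) hdiv
  · exact hc.mem_range_of_isTangentAt hx hS hint hv' hcs fun p hp =>
      (heq p hp).eq_of_nhds ▸ htan p hp

end TangentPotentialField

namespace IsTangentPotentialField

variable {S : Set E3} {X Y : E3 → E3} {p : E3}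

theorem differentiable (hX : IsTangentPotentialField S X) : Differentiable ℝ X :=
  hX.contDiff.differentiable one_ne_zero

theorem add (hX : IsTangentPotentialField S X) (hY : IsTangentPotentialField S Y) :
    IsTangentPotentialField S (X + Y) := by
  have hadd (p : E3) : fderiv ℝ (X + Y) p = fderiv ℝ X p + fderiv ℝ Y p :=
    fderiv_add (hX.differentiable p) (hY.differentiable p)
  refine ⟨hX.contDiff.add hY.contDiff, hX.hasCompactSupport.add hY.hasCompactSupport,
    fun p hp => ?_, fun p hp => ?_, fun f U V hc x hx => ?_⟩
  · rw [hadd]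
    exact (hX.isSymmetric p hp).add (hY.isSymmetric p hp)
  · rw [hadd, ContinuousLinearMap.toLinearMap_add, map_add, hX.trace_eq_zero p hp,
      hY.trace_eq_zero p hp, add_zero]
  · exact (fderiv ℝ f x).range.add_mem (hX.mem_range f U V hc x hx) (hY.mem_range f U V hc x hx)

theorem sub (hX : IsTangentPotentialField S X) (hY : IsTangentPotentialField S Y) :
    IsTangentPotentialField S (X - Y) := by
  have hsub (p : E3) : fderiv ℝ (X - Y) p = fderiv ℝ X p - fderiv ℝ Y p :=
    fderiv_sub (hX.differentiable p) (hY.differentiable p)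
  refine ⟨hX.contDiff.sub hY.contDiff, hX.hasCompactSupport.sub hY.hasCompactSupport,
    fun p hp => ?_, fun p hp => ?_, fun f U V hc x hx => ?_⟩
  · rw [hsub]
    exact (hX.isSymmetric p hp).sub (hY.isSymmetric p hp)
  · rw [hsub, ContinuousLinearMap.toLinearMap_sub, map_sub, hX.trace_eq_zero p hp,
      hY.trace_eq_zero p hp, sub_zero]
  · exact (fderiv ℝ f x).range.sub_mem (hX.mem_range f U V hc x hx) (hY.mem_range f U V hc x hx)

theorem exists_isFlow (hX : IsTangentPotentialField S X) (hcpt : IsCompact S)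
    (hS : IsSurface 2 S) : ∃ Φ, IsFlow X Φ ∧ ∀ p ∈ S, ∀ t, Φ p t ∈ S := by
  obtain ⟨K, hK⟩ := hX.contDiff.lipschitzWith_of_hasCompactSupport hX.hasCompactSupport one_ne_zero
  obtain ⟨Φ, hΦ⟩ := _root_.exists_isFlow hX.contDiff hX.hasCompactSupport
  have htan (p : E3) (hp : p ∈ S) : IsTangentAt S p (X p) := by
    obtain ⟨f, U, V, x, hx, hc, rfl⟩ := hS.exists_isChart hp
    exact hc.isTangentAt hx (hX.mem_range f U V hc x hx)
  exact ⟨Φ, hΦ, fun p hp t => hΦ.mem_of_isTangentAt hcpt hK htan hp t⟩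

theorem inner_eq_zero (hX : IsTangentPotentialField S X) (hY : IsTangentPotentialField S Y)
    (hcpt : IsCompact S) (hS : IsSurface 2 S) (hXY : ∀ p ∈ S, fderiv ℝ X p (Y p) = 0)
    (hconst : ∀ p ∈ S, ∀ᶠ q in 𝓝[S] p, ⟪X q, Y q⟫ = ⟪X p, Y p⟫) (hp : p ∈ S) :
    ⟪X p, Y p⟫ = 0 := by
  obtain ⟨Ψ, hΨ, hΨS⟩ := hY.exists_isFlow hcpt hS
  have hlc : IsLocallyConstant fun t => ⟪X (Ψ p t), Y (Ψ p t)⟫ := by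
    refine (IsLocallyConstant.iff_eventually_eq _).2 fun t => ?_
    exact (tendsto_nhdsWithin_iff.2 ⟨(hΨ.hasDerivAt p t).continuousAt,
      Eventually.of_forall (hΨS p hp)⟩).eventually (hconst _ (hΨS p hp t))
  have hinner (t : ℝ) : ⟪X p, Y (Ψ p t)⟫ = ⟪X p, Y p⟫ := by
    simpa only [hΨ.map_zero, hΨ.eq_of_fderiv_eq_zero hΨS hX.differentiable hXY hp] using
      hlc.apply_eq_of_preconnectedSpace t 0
  refine eq_zero_of_hasDerivAt_const_of_isBounded (γ := fun t => ⟪X p, Ψ p t⟫) (fun t => ?_)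
    ((hcpt.image (innerSL ℝ (X p)).continuous).isBounded.subset ?_)
  · rw [← hinner t]
    exact (innerSL ℝ (X p)).hasFDerivAt.comp_hasDerivAt t (hΨ.hasDerivAt p t)
  · rintro _ ⟨t, rfl⟩
    exact ⟨_, hΨS p hp t, rfl⟩

theorem fderiv_apply_eq_zero (hX : IsTangentPotentialField S X) (hY : IsTangentPotentialField S Y)
    (hS : IsSurface 2 S) (hXY : ∀ p ∈ S, fderiv ℝ X p (Y p) = 0)
    (horth : ∀ p ∈ S, ⟪X p, Y p⟫ = 0) (hp : p ∈ S) : fderiv ℝ Y p (X p) = 0 := by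
  obtain ⟨f, U, V, x, hx, hc, rfl⟩ := hS.exists_isChart hp
  have hnormal (ζ : E2) : ⟪fderiv ℝ Y (f x) (X (f x)), fderiv ℝ f x ζ⟫ = 0 := by
    have hinner := ((hX.differentiable _).hasFDerivAt.comp x (hc.hasFDerivAt hx)).inner ℝ
      ((hY.differentiable _).hasFDerivAt.comp x (hc.hasFDerivAt hx))
    have hzero : HasFDerivAt (fun y => ⟪X (f y), Y (f y)⟫) (0 : E2 →L[ℝ] ℝ) x :=
      (hasFDerivAt_const 0 x).congr_of_eventuallyEq
        ((hc.eventually_mem hx).mono fun y hy => horth _ hy)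
    have hsum : ⟪X (f x), fderiv ℝ Y (f x) (fderiv ℝ f x ζ)⟫ +
        ⟪fderiv ℝ X (f x) (fderiv ℝ f x ζ), Y (f x)⟫ = 0 := by
      simpa [fderivInnerCLM_apply] using DFunLike.congr_fun (hinner.unique hzero) ζ
    have hsymX := hX.isSymmetric _ hp (fderiv ℝ f x ζ) (Y (f x))
    have hsymY := hY.isSymmetric _ hp (X (f x)) (fderiv ℝ f x ζ)
    simp only [ContinuousLinearMap.coe_coe, hXY _ hp, inner_zero_right] at hsymX hsymY
    rw [hsymY, ← hsum, hsymX, add_zero]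
  obtain ⟨ζ, hζ⟩ := lieBracket_mem_range (hc.contDiffAt hx) (hc.injective_fderiv x hx)
    (hX.differentiable _) (hY.differentiable _)
    ((hc.isOpen_source.eventually_mem hx).mono fun y hy => hX.mem_range f U V hc y hy)
    ((hc.isOpen_source.eventually_mem hx).mono fun y hy => hY.mem_range f U V hc y hy)
  rw [VectorField.lieBracket, hXY _ hp, sub_zero] at hζ
  simpa [hζ] using hnormal ζ

end IsTangentPotentialField

namespace IsSumDiffPair

variable {S : Set E3} {M Q : E3 → E3} {q : E3}

theorem inner_acceleration_right_eq_zero (h : IsSumDiffPair S M Q) (hq : q ∈ S) :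
    ⟪M q, acceleration Q q⟫ = 0 := by
  simpa [acceleration, h.fderiv_right_apply q hq] using (h.right.isSymmetric q hq (M q) (Q q)).symm

theorem inner_acceleration_acceleration_eq_zero (h : IsSumDiffPair S M Q) (hq : q ∈ S) :
    ⟪acceleration M q, acceleration Q q⟫ = 0 := by
  obtain ⟨Φ, hΦ, hΦS⟩ := h.left.exists_isFlow h.isCompact h.isSurface
  obtain ⟨Ψ, hΨ, hΨS⟩ := h.right.exists_isFlow h.isCompact h.isSurface
  obtain ⟨K, hK⟩ := h.left.contDiff.lipschitzWith_of_hasCompactSupport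
    h.left.hasCompactSupport one_ne_zero
  obtain ⟨L, hL⟩ := h.right.contDiff.lipschitzWith_of_hasCompactSupport
    h.right.hasCompactSupport one_ne_zero
  exact inner_fderiv_self_fderiv_self_eq_zero hΦ hΨ (hK.weaken (le_max_left K L))
    (hL.weaken (le_max_right K L)) h.left.differentiable h.right.differentiable
    h.isCompact.isBounded hΦS hΨS
    (fun _ hp t => hΨ.eq_of_fderiv_eq_zero hΨS h.left.differentiable h.fderiv_left_apply hp t)
    (fun _ hp t => hΦ.eq_of_fderiv_eq_zero hΦS h.right.differentiable h.fderiv_right_apply hp t)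
    (fun _ hp => h.inner_acceleration_right_eq_zero hp) hq

theorem exists_acceleration_ne_zero (h : IsSumDiffPair S M Q) (hne : S.Nonempty) :
    ∃ q ∈ S, acceleration M q ≠ 0 := by
  by_contra! hzero
  obtain ⟨p, hp, hM, -⟩ := closure_nonempty_iff.1 (hne.mono h.subset_closure)
  obtain ⟨Φ, hΦ, hΦS⟩ := h.left.exists_isFlow h.isCompact h.isSurface
  refine hM (eq_zero_of_hasDerivAt_const_of_isBounded (γ := Φ p) (fun t => ?_)
    (h.isCompact.isBounded.subset (range_subset_iff.2 (hΦS p hp))))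
  exact hΦ.eq_of_fderiv_eq_zero hΦS h.left.differentiable hzero hp t ▸ hΦ.hasDerivAt p t

/- Where `M` and its acceleration are independent, they span the plane orthogonal to both `Q` and
the acceleration of `Q`. -/
theorem not_linearIndependent (h : IsSumDiffPair S M Q) (hq : q ∈ S) :
    ¬ LinearIndependent ℝ ![M q, acceleration M q] := by
  intro hli
  refine hli.ne_zero 1 (h.acceleration_eq_zero
    (O := {z | LinearIndependent ℝ ![z.1, z.2]}) ?_ (fun p hp hpli => ?_) hq hli)
  · exact isOpen_setOfPred_linearIndependent.preimage
      (f := fun z : E3 × E3 => ![z.1, z.2]) (by fun_prop)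
  · obtain hQ | hQ := eq_or_ne (Q p) 0
    · exact ⟨0, by simp [acceleration, hQ]⟩
    · exact exists_eq_smul_of_inner_eq_zero (by simp) hpli hQ (h.inner_eq_zero p hp)
        ((real_inner_comm _ _).trans (h.symm.inner_acceleration_right_eq_zero hp))
        (h.inner_acceleration_right_eq_zero hp) (h.inner_acceleration_acceleration_eq_zero hp)

theorem eq_empty (h : IsSumDiffPair S M Q) : S = ∅ := by
  by_contra hne
  obtain ⟨q, hq, hW⟩ := h.exists_acceleration_ne_zero (nonempty_iff_ne_empty.2 hne)
  refine hW (h.acceleration_eq_zero isOpen_univ (fun p hp _ => ?_) hq (mem_univ _))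
  obtain hQ | hQ := eq_or_ne (Q p) 0
  · exact ⟨0, by simp [acceleration, hQ]⟩
  · obtain ⟨c, hc⟩ : ∃ c : ℝ, c • Q p = acceleration Q p := by
      simpa [LinearIndependent.pair_iff' hQ] using h.symm.not_linearIndependent hp
    exact ⟨c, hc.symm⟩

end IsSumDiffPair

section VortexSheet

theorem interior_eq_empty_of_subset_closure {X : Type*} [TopologicalSpace X] {S Ω : Set X}
    (hdisj : Disjoint Ω S) (hcl : S ⊆ closure Ω) : interior S = ∅ := by
  have hint := (hdisj.mono_right interior_subset).closure_left isOpen_interior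
  exact hint.eq_bot_of_ge (interior_subset.trans hcl)

theorem subset_closure_inter_inter {X : Type*} [TopologicalSpace X] {S A B : Set X}
    (hA : IsOpen A) (hSA : S ⊆ closure (S ∩ A)) (hSB : S ⊆ closure (S ∩ B)) :
    S ⊆ closure (S ∩ (A ∩ B)) := by
  refine hSA.trans (closure_minimal (fun p ⟨hp, hpA⟩ => ?_) isClosed_closure)
  refine mem_closure_iff.2 fun O hO hpO => ?_
  obtain ⟨q, ⟨hqO, hqA⟩, hqS, hqB⟩ := mem_closure_iff.1 (hSB hp) (O ∩ A) (hO.inter hA) ⟨hpO, hpA⟩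
  exact ⟨q, hqO, hqS, hqA, hqB⟩

theorem subset_closure_of_not_exists_isOpen {X : Type*} [TopologicalSpace X] {S : Set X}
    {P : X → Prop} (h : ¬ ∃ O, IsOpen O ∧ (S ∩ O).Nonempty ∧ ∀ p ∈ S ∩ O, P p) :
    S ⊆ closure (S ∩ {p | ¬ P p}) := by
  push Not at h
  refine fun p hp => mem_closure_iff.2 fun O hO hpO => ?_
  obtain ⟨q, ⟨hqS, hqO⟩, hq⟩ := h O hO ⟨p, hp, hpO⟩
  exact ⟨q, hqO, hqS, hq⟩

variable {S Ωm Ωp : Set E3} {vm vp : E3 → E3}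

theorem CVSBase.exists_isTangentPotentialField (h : CVSBase S Ωm Ωp vm vp) (hcpt : IsCompact S) :
    ∃ vm' vp', IsTangentPotentialField S vm' ∧ IsTangentPotentialField S vp' ∧
      ∀ p ∈ S, vm' =ᶠ[𝓝 p] vm ∧ vp' =ᶠ[𝓝 p] vp := by
  have hint := interior_eq_empty_of_subset_closure h.disjm h.clm
  obtain ⟨Wm, hWm, hSWm, hvm⟩ := h.smoothm
  obtain ⟨Wp, hWp, hSWp, hvp⟩ := h.smoothp
  obtain ⟨vm', hm, heqm⟩ := _root_.exists_isTangentPotentialField hcpt hint hWm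
    (subset_union_right.trans hSWm) hvm h.clm h.divm h.curlm h.tangentm
  obtain ⟨vp', hp, heqp⟩ := _root_.exists_isTangentPotentialField hcpt hint hWp
    (subset_union_right.trans hSWp) hvp h.clp h.divp h.curlp h.tangentp
  exact ⟨vm', vp', hm, hp, fun p hp => ⟨heqm p hp, heqp p hp⟩⟩

theorem CVSPair.exists_isSumDiffPair (h : CVSPair S Ωm Ωp vm vp) (hS : IsSurface 2 S)
    (hcpt : IsCompact S) (hadd : S ⊆ closure (S ∩ {p | ¬ vp p = -vm p}))
    (hsub : S ⊆ closure (S ∩ {p | ¬ vp p = vm p})) : ∃ X Y, IsSumDiffPair S X Y := by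
  obtain ⟨vm', vp', hm, hp, heq⟩ := h.exists_isTangentPotentialField hcpt
  have hvm (q : E3) (hq : q ∈ S) : vm' q = vm q := (heq q hq).1.eq_of_nhds
  have hvp (q : E3) (hq : q ∈ S) : vp' q = vp q := (heq q hq).2.eq_of_nhds
  have hX := hp.add hm
  have hY := hp.sub hm
  have hXY (q : E3) (hq : q ∈ S) : fderiv ℝ (vp' + vm') q ((vp' - vm') q) = 0 := by
    rw [fderiv_add (hp.differentiable q) (hm.differentiable q), (heq q hq).1.fderiv_eq,
      (heq q hq).2.fderiv_eq, Pi.sub_apply, hvm q hq, hvp q hq, h.strain q hq]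
  have hinner (q : E3) (hq : q ∈ S) :
      ⟪(vp' + vm') q, (vp' - vm') q⟫ = ‖vp q‖ ^ 2 - ‖vm q‖ ^ 2 := by
    rw [Pi.add_apply, Pi.sub_apply, hvm q hq, hvp q hq, inner_add_left, inner_sub_right,
      inner_sub_right, real_inner_self_eq_norm_sq, real_inner_self_eq_norm_sq, real_inner_comm]
    ring
  have horth (q : E3) (hq : q ∈ S) : ⟪(vp' + vm') q, (vp' - vm') q⟫ = 0 := by
    refine hX.inner_eq_zero hY hcpt hS hXY (fun r hr => ?_) hq
    filter_upwards [h.bernoulli r hr, self_mem_nhdsWithin] with s hs hsS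
    rw [hinner s hsS, hinner r hr, hs]
  have hXopen : IsOpen {q | (vp' + vm') q ≠ 0} :=
    isOpen_ne_fun hX.contDiff.continuous continuous_const
  refine ⟨vp' + vm', vp' - vm', hcpt, interior_eq_empty_of_subset_closure h.disjm h.clm, hS,
    hX, hY, hXY, fun q hq => hX.fderiv_apply_eq_zero hY hS hXY horth hq, horth,
    subset_closure_inter_inter hXopen (hadd.trans (closure_mono ?_))
      (hsub.trans (closure_mono ?_))⟩
  · rintro q ⟨hq, hne⟩
    refine ⟨hq, fun h0 => hne ?_⟩
    rw [← hvm q hq, ← hvp q hq]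
    exact eq_neg_of_add_eq_zero_left h0
  · rintro q ⟨hq, hne⟩
    refine ⟨hq, fun h0 => hne ?_⟩
    rw [← hvm q hq, ← hvp q hq]
    exact sub_eq_zero.1 h0

end VortexSheet

theorem statement6_general {S Ωm Ωp : Set E3} {vm vp : E3 → E3}
    (hS : IsSurface 2 S) (hcpt : IsCompact S) (hne : S.Nonempty)
    (hCVS : CVSPair S Ωm Ωp vm vp) :
    (∃ O : Set E3, IsOpen O ∧ (S ∩ O).Nonempty ∧ ∀ p ∈ S ∩ O, vp p = vm p) ∨
    (∃ O : Set E3, IsOpen O ∧ (S ∩ O).Nonempty ∧ ∀ p ∈ S ∩ O, vp p = -vm p) := by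
  by_contra h
  obtain ⟨hsub, hadd⟩ := not_or.1 h
  obtain ⟨X, Y, hXY⟩ := hCVS.exists_isSumDiffPair hS hcpt
    (subset_closure_of_not_exists_isOpen hadd) (subset_closure_of_not_exists_isOpen hsub)
  exact hne.ne_empty hXY.eq_empty

/-- Let `S ⊂ ℝ³` be a smooth compact closed connected embedded surface of
genus strictly greater than 1, i.e. homeomorphic to neither the 2-sphere nor the 2-torus,
bounding the region `Ωm` with exterior `Ωp`, and let `(vm, vp)` satisfy the CVS conditions
(1)–(5).  Then either `vp = vm` on some nonempty (relatively) open subset of `S`, or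
`vp = -vm` on some nonempty (relatively) open subset of `S`. -/
theorem statement6
    (S Ωm Ωp : Set E3) (vm vp : E3 → E3)
    (hS : IsSurface 2 S) (hcpt : IsCompact S) (hconn : IsConnected S)
    (hnotSphere : ¬ Nonempty (S ≃ₜ (Metric.sphere (0 : E3) 1)))
    (hnotTorus : ¬ Nonempty (S ≃ₜ (UnitAddCircle × UnitAddCircle)))
    (henc : EnclosedBy S Ωm Ωp)
    (hCVS : CVSPair S Ωm Ωp vm vp) :
    (∃ O : Set E3, IsOpen O ∧ (S ∩ O).Nonempty ∧ ∀ p ∈ S ∩ O, vp p = vm p) ∨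
    (∃ O : Set E3, IsOpen O ∧ (S ∩ O).Nonempty ∧ ∀ p ∈ S ∩ O, vp p = -vm p) :=
  statement6_general hS hcpt hconn.nonempty hCVS
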